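/- arXiv:2405.00778 — 4 statements merged into one kernel-verified Lean document; each statement's English description precedes it below -/
import Mathlib

section
/- Let m, n ≥ 2 and let F be any field. For a set E ⊆ [m]×[n], the complement ([m]×[n]) ∖ E is spanning in the tensor matroid T_{m,n}(m−2, n−2, F) (i.e., E is a correctable erasure pattern for an (m,n,a=2,b=2) maximally recoverable tensor code) if and only if E, viewed as the edge set of a bipartite graph, admits an orientation with no directed cycles and no alternating cycles. -/
open scoped Classical

noncomputable section

/-- The field of fractions of the polynomial ring over `F` in variables
`X i k` (`i ∈ [m]`, `k ∈ [s]`) and `Y j l` (`j ∈ [n]`, `l ∈ [r]`). -/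
abbrev TField (F : Type*) [Field F] (m n s r : ℕ) :=
  FractionRing (MvPolynomial ((Fin m × Fin s) ⊕ (Fin n × Fin r)) F)

/-- The vector `u_i ⊗ v_j ∈ K_F^{[s]×[r]}` with `(k,l)`-entry `X_{ik} · Y_{jl}`. -/
noncomputable def tvec (F : Type*) [Field F] (m n s r : ℕ) (e : Fin m × Fin n) :
    Fin s × Fin r → TField F m n s r := fun kl =>
  algebraMap (MvPolynomial ((Fin m × Fin s) ⊕ (Fin n × Fin r)) F) (TField F m n s r)
      (MvPolynomial.X (Sum.inl (e.1, kl.1))) *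
  algebraMap (MvPolynomial ((Fin m × Fin s) ⊕ (Fin n × Fin r)) F) (TField F m n s r)
      (MvPolynomial.X (Sum.inr (e.2, kl.2)))

/-- `E` is independent in the tensor matroid `T_{m,n}(s,r,F)`: the family
`{u_i ⊗ v_j : (i,j) ∈ E}` is linearly independent over `K_F`. -/
def TensorIndep (F : Type*) [Field F] (m n s r : ℕ) (E : Set (Fin m × Fin n)) : Prop :=
  LinearIndependent (TField F m n s r) (fun e : E => tvec F m n s r e)

/-- `E` is spanning in the tensor matroid `T_{m,n}(s,r,F)`: the family
`{u_i ⊗ v_j : (i,j) ∈ E}` spans `K_F^{[s]×[r]}`. -/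
def TensorSpanning (F : Type*) [Field F] (m n s r : ℕ) (E : Set (Fin m × Fin n)) : Prop :=
  Submodule.span (TField F m n s r) (tvec F m n s r '' E) = ⊤

/-- A cycle of length `2k` in a bipartite graph `G ⊆ [m]×[n]`: distinct `i_1,…,i_k ∈ [m]`
and distinct `j_1,…,j_k ∈ [n]` such that every edge `(i_t, j_t)` and `(i_{t+1}, j_t)`
(indices mod `k`) lies in `G`. -/
def IsCycle {m n : ℕ} (G : Set (Fin m × Fin n)) (k : ℕ)
    (i : ZMod k → Fin m) (j : ZMod k → Fin n) : Prop :=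
  2 ≤ k ∧ Function.Injective i ∧ Function.Injective j ∧
    (∀ t, (i t, j t) ∈ G) ∧ (∀ t, (i (t + 1), j t) ∈ G)

/-- An orientation of the edges of `G` is a map `o` assigning to each edge a direction;
`o e = true` means the edge `e` is oriented from its `[m]`-endpoint to its `[n]`-endpoint.
The orientation is good if no cycle of `G` is directed (all edges oriented in the
direction of some traversal) and no cycle of `G` is alternating (every vertex of the
cycle is a source or a sink for the two incident cycle edges). -/
def GoodOrientation {m n : ℕ} (G : Set (Fin m × Fin n)) (o : Fin m × Fin n → Bool) : Prop :=
  ∀ (k : ℕ) (i : ZMod k → Fin m) (j : ZMod k → Fin n), IsCycle G k i j →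
    (¬ ((∀ t, o (i t, j t) = true ∧ o (i (t + 1), j t) = false) ∨
        (∀ t, o (i t, j t) = false ∧ o (i (t + 1), j t) = true))) ∧
    (¬ (∀ t, o (i t, j t) = o (i (t + 1), j t) ∧ o (i t, j t) = o (i t, j (t - 1))))

/-!
The vectors indexed by the complement of `E` span if and only if the tensor product of the codes
generated by the generic `u` and `v` has no nonzero codeword supported on `E`. Both codes have
codimension two, so after row operations and a rescaling of the coordinates their check matrices
have rows `1, x` and `1, y` with injective `x`, `y`. Putting `A i j = (x i - y j) * P i j` turns a
codeword `P` into a matrix `A` supported on `E` with vanishing row and column sums, subject to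
`∑ j, A i j / (x i - y j) = 0` and `∑ i, A i j / (y j - x i) = 0`.

Regard `A` as symmetric weights on the pairs of points among the `x i` and `y j`, and move the
points one by one to a common position `c`. While a set `S` of points sits at `c`, injectivity of
the conditions at the other points is witnessed by a polynomial in `c`. Its degree is less than
the number of these points, because their mutual terms cancel in the sum of all Cauchy sums. So
one of these points is not a root, and `c` can be put there. At the end only the order of the
points matters, the condition at a point being that the weights towards the points moved earlier
sum to zero. Conversely, if these conditions admit only `A = 0` for some order of the points, the
moves can be undone, since a nonzero polynomial over an infinite field is nonzero at a generic `c`.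

An order of the points is the same as an acyclic orientation of `E`. The order conditions split
`A` by direction into two matrices that both have vanishing row and column sums, so only `A = 0`
satisfies them exactly when the edges of each direction form a forest, i.e. when there is no
alternating cycle.
-/

section Pencil

variable {k : Type*} [Field k] {W : Type*} [AddCommGroup W] [Module k W] [FiniteDimensional k W]

lemma exists_polynomial_eval_eq_det (f g : W →ₗ[k] W) :
    ∃ p : Polynomial k, p.natDegree ≤ Module.finrank k W ∧
      p.coeff (Module.finrank k W) = LinearMap.det g ∧
      ∀ c, p.eval c = LinearMap.det (f + c • g) := by
  let b := Module.finBasis k W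
  let A := LinearMap.toMatrix b b g
  let B := LinearMap.toMatrix b b f
  refine ⟨((Polynomial.X : Polynomial k) • A.map Polynomial.C + B.map Polynomial.C).det, ?_, ?_,
    fun c => ?_⟩
  · simpa using Polynomial.natDegree_det_X_add_C_le A B
  · simpa [A] using Polynomial.coeff_det_X_add_C_card A B
  · rw [← LinearMap.det_toMatrix b, ← Polynomial.coe_evalRingHom, RingHom.map_det]
    congr 1
    ext i j
    simp [A, B, add_comm, mul_comm c]

lemma injective_of_det_comp_ne_zero {V : Type*} [AddCommGroup V] [Module k V] {L : V →ₗ[k] W}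
    {h : W →ₗ[k] V} (hdet : (L ∘ₗ h).det ≠ 0) : Function.Injective h :=
  .of_comp (f := L) (LinearMap.equivOfDetNeZero (L ∘ₗ h) hdet).injective

lemma exists_polynomial_pencil_injective {ι : Type*} [Fintype ι] [Nonempty ι]
    (f g : W →ₗ[k] ι → k) (hg : ∀ x, ∑ u, g x u = 0) {c₀ : k}
    (hinj : Function.Injective (f + c₀ • g)) :
    ∃ p : Polynomial k, p ≠ 0 ∧ p.natDegree < Fintype.card ι ∧
      ∀ c, p.eval c ≠ 0 → Function.Injective (f + c • g) := by
  obtain ⟨L, hL⟩ := (f + c₀ • g).exists_leftInverse_of_injective (LinearMap.ker_eq_bot.2 hinj)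
  obtain ⟨p, hdeg, hcoeff, heval⟩ := exists_polynomial_eval_eq_det (L ∘ₗ f) (L ∘ₗ g)
  have hdet (c : k) : p.eval c = LinearMap.det (L ∘ₗ (f + c • g)) := by
    rw [heval, LinearMap.comp_add, LinearMap.comp_smul]
  have hp₀ : p ≠ 0 := by
    rintro rfl
    simpa [hL] using hdet c₀
  have hcard : Module.finrank k W ≤ Fintype.card ι := by
    simpa using LinearMap.finrank_le_finrank_of_injective hinj
  refine ⟨p, hp₀, (hdeg.trans hcard).lt_of_ne fun htop => ?_, fun c hc => ?_⟩
  · have hfin : Module.finrank k W = Fintype.card ι := le_antisymm hcard (htop ▸ hdeg)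
    have hg_det : LinearMap.det (L ∘ₗ g) ≠ 0 := by
      rw [← hcoeff, hfin, ← htop]
      exact Polynomial.leadingCoeff_ne_zero.2 hp₀
    have hg_surj : Function.Surjective g :=
      (LinearMap.injective_iff_surjective_of_finrank_eq_finrank (by simpa using hfin)).1
        (injective_of_det_comp_ne_zero hg_det)
    obtain ⟨x, hx⟩ := hg_surj (Pi.single (Classical.arbitrary ι) 1)
    simpa [hx] using hg x
  · exact injective_of_det_comp_ne_zero (hdet c ▸ hc)

end Pencil

section Degeneration

variable {k V : Type*} [Field k]

/-- The row sums of a matrix restricted to the columns in `S`. -/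
def rowSum (S : Finset V) : Matrix V V k →ₗ[k] V → k :=
  LinearMap.pi fun u => ∑ w ∈ S, Matrix.entryLinearMap k k u w

/-- The Cauchy sums `∑_{w ∈ S} N u w / (z u - z w)`; the diagonal term is `N u u / 0 = 0`. -/
def cauchySum (z : V → k) (S : Finset V) : Matrix V V k →ₗ[k] V → k :=
  LinearMap.pi fun u => ∑ w ∈ S, (z u - z w)⁻¹ • Matrix.entryLinearMap k k u w

variable {z : V → k} {S : Finset V}

lemma rowSum_apply (N : Matrix V V k) (u : V) : rowSum S N u = ∑ w ∈ S, N u w := by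
  simp [rowSum]

lemma cauchySum_apply (N : Matrix V V k) (u : V) :
    cauchySum z S N u = ∑ w ∈ S, N u w / (z u - z w) := by
  simp [cauchySum, div_eq_inv_mul]

lemma sum_cauchySum_of_isSymm (z : V → k) (S : Finset V) {N : Matrix V V k} (hN : N.IsSymm) :
    ∑ u ∈ S, cauchySum z S N u = 0 := by
  simp only [cauchySum_apply, ← Finset.sum_product']
  refine Finset.sum_involution (fun p _ => p.swap) (fun p _ => ?_) (fun p _ hp hswap => hp ?_)
    (fun p hp => by simpa [and_comm] using hp) (fun p _ => p.swap_swap)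
  · rw [Prod.fst_swap, Prod.snd_swap, hN.apply, ← neg_sub (z p.1), div_neg, add_neg_cancel]
  · rw [show p.1 = p.2 from congrArg Prod.snd hswap, sub_self, div_zero]

/-- The weights in `W` whose sums at each `u ∈ l` over the entries behind `u` in `l` vanish. -/
def orderedWeights (W : Submodule k (Matrix V V k)) : List V → Submodule k (Matrix V V k)
  | [] => W
  | u :: l => orderedWeights W l ⊓ LinearMap.ker (LinearMap.proj u ∘ₗ rowSum l.toFinset)

lemma orderedWeights_le (W : Submodule k (Matrix V V k)) : ∀ l, orderedWeights W l ≤ W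
  | [] => le_rfl
  | _ :: l => inf_le_left.trans (orderedWeights_le W l)

lemma mem_orderedWeights_iff [BEq V] [LawfulBEq V] {W : Submodule k (Matrix V V k)} {l : List V}
    (hl : l.Nodup) {N : Matrix V V k} :
    N ∈ orderedWeights W l ↔
      N ∈ W ∧ ∀ u ∈ l, ∑ w ∈ l.toFinset with l.idxOf u < l.idxOf w, N u w = 0 := by
  induction l with
  | nil => simp [orderedWeights]
  | cons a l ih =>
    obtain ⟨ha, hl⟩ := List.nodup_cons.1 hl
    have hne {v : V} (hv : v ∈ l) : v ≠ a := fun h => ha (h ▸ hv)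
    have hhead : ((a :: l).toFinset.filter fun w => (a :: l).idxOf a < (a :: l).idxOf w) =
        l.toFinset := by
      ext w
      obtain rfl | hw := eq_or_ne w a
      · simp [ha]
      · simp [hw, List.idxOf_cons_ne _ hw.symm]
    have htail {u : V} (hu : u ∈ l) :
        ((a :: l).toFinset.filter fun w => (a :: l).idxOf u < (a :: l).idxOf w) =
          l.toFinset.filter fun w => l.idxOf u < l.idxOf w := by
      ext w
      by_cases hw : w = a <;>
        simp [hw, ha, List.idxOf_cons_ne _ (hne hu).symm, List.idxOf_cons_ne, Ne.symm]
    rw [orderedWeights, Submodule.mem_inf, ih hl, List.forall_mem_cons, hhead, LinearMap.mem_ker,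
      LinearMap.comp_apply, LinearMap.proj_apply, rowSum_apply, and_assoc, and_comm (b := _ = _)]
    exact and_congr_right' (and_congr_right' (forall₂_congr fun u hu => by rw [htail hu]))

variable [Fintype V]

lemma mem_orderedWeights_iff_of_forall_mem [BEq V] [LawfulBEq V] {W : Submodule k (Matrix V V k)}
    {l : List V} (hl : l.Nodup) (hmem : ∀ u, u ∈ l) {N : Matrix V V k} :
    N ∈ orderedWeights W l ↔ N ∈ W ∧ ∀ u, ∑ w with l.idxOf u < l.idxOf w, N u w = 0 := by
  have huniv : l.toFinset = .univ := by ext; simp [hmem]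
  simp only [mem_orderedWeights_iff hl, hmem, huniv, true_imp_iff]

/-- The weights `N` on the pairs of points of `z` are in equilibrium once the points of `S` have
been moved to the position `c`: at every other point the Cauchy sum, multiplied by `z u - c`,
vanishes. At `c = z u` only the contribution of `S` is left in the condition at `u`. -/
def InEquilibrium (z : V → k) (c : k) (S : Finset V) (N : Matrix V V k) : Prop :=
  ∀ u ∉ S, rowSum S N u + (z u - c) * cauchySum z Sᶜ N u = 0

/-- The zero matrix is the only equilibrium in `W`. -/
def EquilibriumFree (z : V → k) (c : k) (S : Finset V) (W : Submodule k (Matrix V V k)) : Prop :=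
  ∀ N ∈ W, InEquilibrium z c S N → N = 0

variable {c : k} {W : Submodule k (Matrix V V k)}

lemma EquilibriumFree.exists_polynomial (hW : ∀ N ∈ W, N.IsSymm) (hS : Sᶜ.Nonempty)
    (h : EquilibriumFree z c S W) :
    ∃ p : Polynomial k, p ≠ 0 ∧ p.natDegree < Sᶜ.card ∧
      ∀ c', p.eval c' ≠ 0 → EquilibriumFree z c' S W := by
  let restrict : (V → k) →ₗ[k] ↥Sᶜ → k := LinearMap.funLeft k k Subtype.val
  let f : W →ₗ[k] ↥Sᶜ → k :=
    restrict ∘ₗ (rowSum S + LinearMap.mulLeft k z ∘ₗ cauchySum z Sᶜ) ∘ₗ W.subtype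
  let g : W →ₗ[k] ↥Sᶜ → k := -(restrict ∘ₗ cauchySum z Sᶜ ∘ₗ W.subtype)
  have hker (c : k) (N : W) : (f + c • g) N = 0 ↔ InEquilibrium z c S N := by
    simp only [InEquilibrium, sub_mul]
    simp [f, g, restrict, funext_iff, LinearMap.funLeft_apply, sub_eq_add_neg, add_assoc]
  have hfg (c : k) : EquilibriumFree z c S W ↔ Function.Injective (f + c • g) := by
    simp only [injective_iff_map_eq_zero, hker, EquilibriumFree, Subtype.forall,
      Submodule.mk_eq_zero]
  have : Nonempty ↥Sᶜ := hS.to_subtype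
  have hg (N : W) : ∑ u, g N u = 0 := by
    have hsum := (Finset.sum_coe_sort Sᶜ (cauchySum z Sᶜ N.1)).trans
      (sum_cauchySum_of_isSymm z Sᶜ (hW N N.2))
    simp only [g, restrict, LinearMap.neg_apply, LinearMap.comp_apply, LinearMap.funLeft_apply,
      Pi.neg_apply, Finset.sum_neg_distrib, neg_eq_zero]
    exact hsum
  simpa only [← hfg, Fintype.card_coe] using exists_polynomial_pencil_injective f g hg ((hfg c).1 h)

lemma EquilibriumFree.exists_move_to_point (hz : Function.Injective z) (hW : ∀ N ∈ W, N.IsSymm)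
    (hS : Sᶜ.Nonempty) (h : EquilibriumFree z c S W) :
    ∃ u ∉ S, EquilibriumFree z (z u) S W := by
  obtain ⟨p, hp₀, hdeg, hp⟩ := h.exists_polynomial hW hS
  by_contra! hfail
  refine hp₀ (p.eq_zero_of_natDegree_lt_card_of_eval_eq_zero (f := fun u : ↥Sᶜ => z u)
    (hz.comp Subtype.val_injective) (fun u => ?_) (by simpa only [Fintype.card_coe]))
  by_contra hu
  exact hfail u (Finset.mem_compl.1 u.2) (hp _ hu)

lemma EquilibriumFree.exists_move_off [Infinite k] (hW : ∀ N ∈ W, N.IsSymm) (hS : Sᶜ.Nonempty)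
    (h : EquilibriumFree z c S W) (s : Finset k) :
    ∃ c' ∉ s, EquilibriumFree z c' S W := by
  obtain ⟨p, hp₀, -, hp⟩ := h.exists_polynomial hW hS
  obtain ⟨c', hc'⟩ := Infinite.exists_notMem_finset (s ∪ p.roots.toFinset)
  simp only [Finset.mem_union, Multiset.mem_toFinset, Polynomial.mem_roots hp₀, not_or] at hc'
  exact ⟨c', hc'.1, hp c' hc'.2⟩

lemma inEquilibrium_apply_iff (hz : Function.Injective z) {u : V} (hu : u ∉ S)
    (N : Matrix V V k) :
    InEquilibrium z (z u) S N ↔ rowSum S N u = 0 ∧ InEquilibrium z (z u) (insert u S) N := by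
  have hmove {v : V} (hv : v ≠ u) :
      rowSum S N v + (z v - z u) * cauchySum z Sᶜ N v =
        rowSum (insert u S) N v + (z v - z u) * cauchySum z (insert u S)ᶜ N v := by
    have huS : u ∈ Sᶜ := Finset.mem_compl.2 hu
    rw [Finset.compl_insert]
    simp only [rowSum_apply, cauchySum_apply]
    rw [Finset.sum_insert hu, ← Finset.add_sum_erase _ _ huS, mul_add,
      mul_div_cancel₀ _ (sub_ne_zero.2 (hz.ne hv))]
    ring
  constructor
  · intro h
    refine ⟨by simpa using h u hu, fun v hv => ?_⟩
    rw [Finset.mem_insert, not_or] at hv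
    exact hmove hv.1 ▸ h v hv.2
  · rintro ⟨hrow, h⟩ v hv
    obtain rfl | hvu := eq_or_ne v u
    · simpa using hrow
    · exact hmove hvu ▸ h v (by simp [hvu, hv])

lemma equilibriumFree_apply_iff (hz : Function.Injective z) {u : V} (hu : u ∉ S) :
    EquilibriumFree z (z u) S W ↔
      EquilibriumFree z (z u) (insert u S)
        (W ⊓ LinearMap.ker (LinearMap.proj u ∘ₗ rowSum S)) := by
  simp only [EquilibriumFree, inEquilibrium_apply_iff hz hu, Submodule.mem_inf, LinearMap.mem_ker,
    LinearMap.comp_apply, LinearMap.proj_apply, and_imp]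

lemma EquilibriumFree.congr {z' : V → k} (h : EquilibriumFree z c S W)
    (hzz' : ∀ u ∉ S, z u = z' u) : EquilibriumFree z' c S W := by
  intro N hN heq
  refine h N hN fun u hu => ?_
  have hsum : cauchySum z Sᶜ N u = cauchySum z' Sᶜ N u := by
    simp only [cauchySum_apply, hzz' u hu]
    exact Finset.sum_congr rfl fun w hw => by rw [hzz' w (Finset.mem_compl.1 hw)]
  rw [hsum, hzz' u hu]
  exact heq u hu

lemma equilibriumFree_empty_iff (hc : ∀ u, z u ≠ c) :
    EquilibriumFree z c ∅ W ↔ ∀ N ∈ W, cauchySum z .univ N = 0 → N = 0 := by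
  have hc' (u : V) : z u - c ≠ 0 := sub_ne_zero.2 (hc u)
  simp [EquilibriumFree, InEquilibrium, rowSum_apply, hc', funext_iff]

lemma exists_orderedWeights_eq_bot (hz : Function.Injective z) (hW : ∀ N ∈ W, N.IsSymm)
    (l : List V) (hl : l.Nodup) (h : EquilibriumFree z c l.toFinset (orderedWeights W l)) :
    ∃ l' : List V, l'.Nodup ∧ (∀ u, u ∈ l') ∧ orderedWeights W l' = ⊥ := by
  induction hn : l.toFinsetᶜ.card generalizing l c with
  | zero =>
    have hmem (u : V) : u ∈ l := by
      have := Finset.card_eq_zero.1 hn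
      simpa using Finset.ext_iff.1 this u
    exact ⟨l, hl, hmem, (Submodule.eq_bot_iff _).2 fun N hN => h N hN fun u hu =>
      absurd (List.mem_toFinset.2 (hmem u)) hu⟩
  | succ n ih =>
    have hS : l.toFinsetᶜ.Nonempty := Finset.card_pos.1 (by omega)
    obtain ⟨u, hu, h'⟩ :=
      h.exists_move_to_point hz (fun N hN => hW N (orderedWeights_le W l hN)) hS
    refine ih (u :: l) (List.nodup_cons.2 ⟨by simpa using hu, hl⟩) (c := z u) ?_ ?_
    · simpa [orderedWeights] using (equilibriumFree_apply_iff hz hu).1 h'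
    · rw [List.toFinset_cons, Finset.compl_insert, Finset.card_erase_of_mem (by simpa using hu), hn,
        Nat.add_sub_cancel]

lemma exists_equilibriumFree [Infinite k] (hz : Function.Injective z) (hc : ∀ u, z u ≠ c)
    (hW : ∀ N ∈ W, N.IsSymm) (l : List V) (hl : l.Nodup)
    (h : EquilibriumFree z c l.toFinset (orderedWeights W l)) :
    ∃ (z' : V → k) (c' : k), Function.Injective z' ∧ (∀ u, z' u ≠ c') ∧
      EquilibriumFree z' c' ∅ W := by
  induction l generalizing z c with
  | nil => exact ⟨z, c, hz, hc, by simpa [orderedWeights] using h⟩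
  | cons u l ih =>
    obtain ⟨hul, hl⟩ := List.nodup_cons.1 hl
    have hul' : u ∉ l.toFinset := by simpa using hul
    let z' := Function.update z u c
    have hz' : Function.Injective z' := by
      intro v w hvw
      by_cases hv : v = u <;> by_cases hw : w = u <;>
        simp_all [z', Function.update_apply, hz.eq_iff, eq_comm]
    have hmoved : EquilibriumFree z' (z' u) l.toFinset (orderedWeights W l) := by
      rw [equilibriumFree_apply_iff hz' hul', show z' u = c from Function.update_self ..,
        ← List.toFinset_cons]
      exact h.congr fun v hv => (Function.update_of_ne (by rintro rfl; simp at hv) _ _).symm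
    obtain ⟨c', hc', h'⟩ := hmoved.exists_move_off
      (fun N hN => hW N (orderedWeights_le W l hN)) ⟨u, by simpa using hul⟩
      (Finset.univ.image z')
    exact ih hz' (by simpa using hc') hl h'

theorem exists_cauchySum_injective_iff [Infinite k] (hW : ∀ N ∈ W, N.IsSymm) :
    (∃ z : V → k, Function.Injective z ∧ ∀ N ∈ W, cauchySum z .univ N = 0 → N = 0) ↔
      ∃ l : List V, l.Nodup ∧ (∀ u, u ∈ l) ∧ orderedWeights W l = ⊥ := by
  constructor
  · rintro ⟨z, hz, h⟩
    obtain ⟨c, hc⟩ := Infinite.exists_notMem_finset (Finset.univ.image z)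
    replace hc : ∀ u, z u ≠ c := by simpa using hc
    exact exists_orderedWeights_eq_bot hz hW [] List.nodup_nil
      ((equilibriumFree_empty_iff hc).2 h)
  · rintro ⟨l, hl, -, h⟩
    let z : V ↪ k :=
      (Fintype.equivFin V).toEmbedding.trans (Fin.valEmbedding.trans (Infinite.natEmbedding k))
    obtain ⟨c, hc⟩ := Infinite.exists_notMem_finset (Finset.univ.image z)
    obtain ⟨z', c', hz', hc', h'⟩ := exists_equilibriumFree (W := W) z.injective
      (by simpa using hc) hW l hl fun N hN _ => by simpa [h] using hN
    exact ⟨z', hz', (equilibriumFree_empty_iff hc').1 h'⟩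

end Degeneration

section Cycles

lemma injOn_window_of_ne {γ : Type*} {c : ℕ → γ} {d : ℕ}
    (hc : ∀ s e, 0 < e → e < d → c (s + e) ≠ c s) (s : ℕ) :
    Set.InjOn (fun t => c (s + t)) (Set.Iio d) := by
  intro t ht t' ht' h
  wlog hlt : t < t' generalizing t t'
  · by_contra hne
    exact hne (this ht' ht h.symm (by omega)).symm
  · refine absurd ?_ (hc (s + t) (t' - t) (by omega) ((Nat.sub_le _ _).trans_lt ht'))
    rw [add_assoc, Nat.add_sub_cancel' hlt.le]
    exact h.symm

lemma exists_first_repetition {α β : Type*} [Finite α] {a : ℕ → α} {b : ℕ → β}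
    (ha : ∀ t, a (t + 1) ≠ a t) (hb : ∀ t, b (t + 1) ≠ b t) :
    ∃ d, 2 ≤ d ∧ (∃ s, a (s + d) = a s ∨ b (s + d) = b s) ∧
      ∀ s, Set.InjOn (fun t => a (s + t)) (Set.Iio d) ∧
        Set.InjOn (fun t => b (s + t)) (Set.Iio d) := by
  let Repeats (d : ℕ) : Prop := 0 < d ∧ ∃ s, a (s + d) = a s ∨ b (s + d) = b s
  have hrep : ∃ d, Repeats d := by
    obtain ⟨s, t, hst, h⟩ := Finite.exists_ne_map_eq_of_infinite a
    rcases hst.lt_or_gt with hlt | hlt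
    · exact ⟨t - s, by omega, s, .inl (by rw [h]; congr 1; omega)⟩
    · exact ⟨s - t, by omega, t, .inl (by rw [← h]; congr 1; omega)⟩
  obtain ⟨d, ⟨hd, hwindow⟩, hmin⟩ : ∃ d, Repeats d ∧ ∀ e < d, ¬ Repeats e :=
    ⟨Nat.find hrep, Nat.find_spec hrep, fun _ => Nat.find_min hrep⟩
  refine ⟨d, ?_, hwindow, fun s =>
    ⟨injOn_window_of_ne (fun s e he hed h => hmin e hed ⟨he, s, .inl h⟩) s,
      injOn_window_of_ne (fun s e he hed h => hmin e hed ⟨he, s, .inr h⟩) s⟩⟩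
  by_contra! h
  obtain rfl : d = 1 := by omega
  obtain ⟨s, h | h⟩ := hwindow
  exacts [ha s h, hb s h]

lemma exists_cycle_of_closed_walk {α β : Type*} {P Q : α → β → Prop} {a : ℕ → α} {b : ℕ → β}
    {d : ℕ} (hd : 2 ≤ d) (ha : Set.InjOn a (Set.Iio d)) (hb : Set.InjOn b (Set.Iio d))
    (hP : ∀ t, P (a t) (b t)) (hQ : ∀ t, Q (a (t + 1)) (b t)) (hclose : Q (a 0) (b (d - 1))) :
    ∃ (k : ℕ) (i : ZMod k → α) (j : ZMod k → β), 2 ≤ k ∧ Function.Injective i ∧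
      Function.Injective j ∧ (∀ t, P (i t) (j t)) ∧ ∀ t, Q (i (t + 1)) (j t) := by
  have : NeZero d := ⟨by omega⟩
  have : Fact (1 < d) := ⟨hd⟩
  refine ⟨d, fun t => a t.val, fun t => b t.val, hd,
    fun t t' h => ZMod.val_injective d (ha t.val_lt t'.val_lt h),
    fun t t' h => ZMod.val_injective d (hb t.val_lt t'.val_lt h), fun t => hP _, fun t => ?_⟩
  simp only [ZMod.val_add, ZMod.val_one]
  obtain hlt | hge := lt_or_ge (t.val + 1) d
  · rw [Nat.mod_eq_of_lt hlt]
    exact hQ _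
  · have hlast : t.val = d - 1 := by have := t.val_lt; omega
    rwa [hlast, Nat.sub_add_cancel (by omega), Nat.mod_self]

lemma exists_cycle_of_walk {α β : Type*} [Finite α] {P Q : α → β → Prop} {a : ℕ → α} {b : ℕ → β}
    (hP : ∀ t, P (a t) (b t)) (hQ : ∀ t, Q (a (t + 1)) (b t)) (ha : ∀ t, a (t + 1) ≠ a t)
    (hb : ∀ t, b (t + 1) ≠ b t) :
    ∃ (k : ℕ) (i : ZMod k → α) (j : ZMod k → β), 2 ≤ k ∧ Function.Injective i ∧
      Function.Injective j ∧ (∀ t, P (i t) (j t)) ∧ ∀ t, Q (i (t + 1)) (j t) := by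
  obtain ⟨d, hd, hwindow, hinj⟩ := exists_first_repetition ha hb
  obtain ⟨s, hs⟩ : ∃ s, Q (a s) (b (s + (d - 1))) := by
    obtain ⟨s, h | h⟩ := hwindow
    · refine ⟨s, ?_⟩
      simpa only [add_assoc, Nat.sub_add_cancel (one_le_two.trans hd), h] using hQ (s + (d - 1))
    · refine ⟨s + 1, ?_⟩
      rw [add_assoc, Nat.add_sub_cancel' (one_le_two.trans hd), h]
      exact hQ s
  exact exists_cycle_of_closed_walk (a := fun t => a (s + t)) (b := fun t => b (s + t)) hd
    (hinj s).1 (hinj s).2 (fun t => hP _) (fun t => hQ _) hs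

end Cycles

section BalancedMatrices

variable {k : Type*} [Field k] {m n : ℕ} {E : Set (Fin m × Fin n)}

/-- The matrices supported on `E` all of whose row and column sums vanish, i.e. the cycle space
of the bipartite graph `E`. -/
def balancedMatrices (k : Type*) [Field k] {m n : ℕ} (E : Set (Fin m × Fin n)) :
    Submodule k (Matrix (Fin m) (Fin n) k) where
  carrier := {A | (∀ i j, (i, j) ∉ E → A i j = 0) ∧ (∀ i, ∑ j, A i j = 0) ∧ ∀ j, ∑ i, A i j = 0}
  zero_mem' := by simp
  add_mem' hA hB := by
    refine ⟨fun i j h => ?_, fun i => ?_, fun j => ?_⟩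
    · simp [hA.1 i j h, hB.1 i j h]
    · simp [Finset.sum_add_distrib, hA.2.1 i, hB.2.1 i]
    · simp [Finset.sum_add_distrib, hA.2.2 j, hB.2.2 j]
  smul_mem' c A hA := by
    refine ⟨fun i j h => ?_, fun i => ?_, fun j => ?_⟩
    · simp [hA.1 i j h]
    · simp [← Finset.mul_sum, hA.2.1 i]
    · simp [← Finset.mul_sum, hA.2.2 j]

lemma mem_balancedMatrices {A : Matrix (Fin m) (Fin n) k} :
    A ∈ balancedMatrices k E ↔
      (∀ i j, (i, j) ∉ E → A i j = 0) ∧ (∀ i, ∑ j, A i j = 0) ∧ ∀ j, ∑ i, A i j = 0 :=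
  Iff.rfl

lemma exists_ne_of_sum_eq_zero {ι : Type*} [Fintype ι] {f : ι → k} (hf : ∑ i, f i = 0) {a : ι}
    (ha : f a ≠ 0) : ∃ b ≠ a, f b ≠ 0 := by
  by_contra! h
  exact ha (by rwa [Fintype.sum_eq_single a h] at hf)

lemma exists_isCycle_of_ne_zero {A : Matrix (Fin m) (Fin n) k} (hA : A ∈ balancedMatrices k E)
    (hA₀ : A ≠ 0) : ∃ k i j, IsCycle E k i j := by
  obtain ⟨hsupp, hrow, hcol⟩ := hA
  have hstep (e : {e : Fin m × Fin n // A e.1 e.2 ≠ 0}) :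
      ∃ e' : {e : Fin m × Fin n // A e.1 e.2 ≠ 0},
        e'.1.1 ≠ e.1.1 ∧ e'.1.2 ≠ e.1.2 ∧ A e'.1.1 e.1.2 ≠ 0 := by
    obtain ⟨i, hi, hAi⟩ := exists_ne_of_sum_eq_zero (hcol e.1.2) e.2
    obtain ⟨j, hj, hAj⟩ := exists_ne_of_sum_eq_zero (hrow i) hAi
    exact ⟨⟨(i, j), hAj⟩, hi, hj, hAi⟩
  choose next hnext using hstep
  obtain ⟨i₀, j₀, h₀⟩ : ∃ i j, A i j ≠ 0 := by simpa [← Matrix.ext_iff] using hA₀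
  let e (t : ℕ) := next^[t] ⟨(i₀, j₀), h₀⟩
  have he (t : ℕ) : e (t + 1) = next (e t) := Function.iterate_succ_apply' ..
  have hmem {i : Fin m} {j : Fin n} (h : A i j ≠ 0) : (i, j) ∈ E := by
    by_contra hij
    exact h (hsupp i j hij)
  exact exists_cycle_of_walk (P := fun i j => (i, j) ∈ E) (Q := fun i j => (i, j) ∈ E)
    (a := fun t => (e t).1.1) (b := fun t => (e t).1.2) (fun t => hmem (e t).2)
    (fun t => he t ▸ hmem (hnext (e t)).2.2) (fun t => he t ▸ (hnext (e t)).1)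
    (fun t => he t ▸ (hnext (e t)).2.1)

/-- The signed indicator matrix of the closed walk `i 0, j 0, i 1, j 1, …`. -/
def cycleMatrix (k : Type*) [Field k] {l : ℕ} [NeZero l] (i : ZMod l → Fin m) (j : ZMod l → Fin n) :
    Matrix (Fin m) (Fin n) k :=
  ∑ t, (Matrix.single (i t) (j t) 1 - Matrix.single (i (t + 1)) (j t) 1)

lemma cycleMatrix_mem_balancedMatrices {l : ℕ} [NeZero l] {i : ZMod l → Fin m}
    {j : ZMod l → Fin n} (h₁ : ∀ t, (i t, j t) ∈ E) (h₂ : ∀ t, (i (t + 1), j t) ∈ E) :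
    cycleMatrix k i j ∈ balancedMatrices k E := by
  have hsingle {a : Fin m} {b : Fin n} (hab : (a, b) ∈ E) {a' : Fin m} {b' : Fin n}
      (h : (a', b') ∉ E) : Matrix.single a b (1 : k) a' b' = 0 :=
    Matrix.single_apply_of_ne _ _ _ _ _ (by rintro ⟨rfl, rfl⟩; exact h hab)
  refine ⟨fun a b hab => ?_, fun a => ?_, fun b => ?_⟩
  · simp [cycleMatrix, Matrix.sum_apply, hsingle (h₁ _) hab, hsingle (h₂ _) hab]
  · simp only [cycleMatrix, Matrix.sum_apply]
    rw [Finset.sum_comm]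
    simp only [Matrix.sub_apply, Matrix.single_apply, ite_and, Finset.sum_sub_distrib,
      Finset.sum_ite_irrel, Finset.sum_ite_eq, Finset.mem_univ, if_true, Finset.sum_const_zero,
      sub_eq_zero]
    exact (Equiv.sum_comp (Equiv.addRight 1) fun t => if i t = a then (1 : k) else 0).symm
  · simp only [cycleMatrix, Matrix.sum_apply]
    rw [Finset.sum_comm]
    simp [Matrix.single_apply, Finset.sum_sub_distrib, ite_and]

lemma cycleMatrix_ne_zero {l : ℕ} [NeZero l] (hl : 2 ≤ l) {i : ZMod l → Fin m}
    {j : ZMod l → Fin n} (hi : Function.Injective i) (hj : Function.Injective j) :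
    cycleMatrix k i j ≠ 0 := by
  have : Fact (1 < l) := ⟨hl⟩
  have h00 : cycleMatrix k i j (i 0) (j 0) = 1 := by
    rw [cycleMatrix, Matrix.sum_apply, Fintype.sum_eq_single 0 fun t ht => by simp [hj.ne ht]]
    simp [hi.eq_iff]
  intro h
  simp [h] at h00

theorem balancedMatrices_eq_bot_iff :
    balancedMatrices k E = ⊥ ↔ ∀ l i j, ¬ IsCycle E l i j := by
  rw [Submodule.eq_bot_iff]
  constructor
  · rintro h l i j ⟨hl, hi, hj, h₁, h₂⟩
    have : NeZero l := ⟨by omega⟩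
    exact cycleMatrix_ne_zero hl hi hj (h _ (cycleMatrix_mem_balancedMatrices (k := k) h₁ h₂))
  · intro h A hA
    by_contra hA₀
    obtain ⟨l, i, j, hcycle⟩ := exists_isCycle_of_ne_zero hA hA₀
    exact h l i j hcycle

end BalancedMatrices

section Orientations

instance {α β : Type*} [BEq α] [LawfulBEq α] [BEq β] [LawfulBEq β] : LawfulBEq (α ⊕ β) where
  eq_of_beq {x y} h := by cases x <;> cases y <;> simp_all [BEq.beq, Sum.instBEq.beq]
  rfl {x} := by cases x <;> simp [BEq.beq, Sum.instBEq.beq]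

variable {m n : ℕ} {E : Set (Fin m × Fin n)} {o : Fin m × Fin n → Bool}

/-- The edges of `E` to which the orientation `o` assigns the direction `β`. -/
def colorClass (E : Set (Fin m × Fin n)) (o : Fin m × Fin n → Bool) (β : Bool) :
    Set (Fin m × Fin n) :=
  {e ∈ E | o e = β}

/-- The orientation `o` of `E` has no directed cycle. -/
def DirectedCycleFree (E : Set (Fin m × Fin n)) (o : Fin m × Fin n → Bool) : Prop :=
  ∀ (l : ℕ) (i : ZMod l → Fin m) (j : ZMod l → Fin n), IsCycle E l i j →
    ¬((∀ t, o (i t, j t) = true ∧ o (i (t + 1), j t) = false) ∨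
      ∀ t, o (i t, j t) = false ∧ o (i (t + 1), j t) = true)

lemma isCycle_colorClass_iff {β : Bool} {l : ℕ} {i : ZMod l → Fin m} {j : ZMod l → Fin n} :
    IsCycle (colorClass E o β) l i j ↔
      IsCycle E l i j ∧ ∀ t, o (i t, j t) = β ∧ o (i (t + 1), j t) = β := by
  simp only [IsCycle, colorClass, Set.mem_ofPred_eq, forall_and]
  tauto

lemma alternating_iff_exists_isCycle_colorClass {l : ℕ} {i : ZMod l → Fin m} {j : ZMod l → Fin n}
    (h : IsCycle E l i j) :
    (∀ t, o (i t, j t) = o (i (t + 1), j t) ∧ o (i t, j t) = o (i t, j (t - 1))) ↔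
      ∃ β, IsCycle (colorClass E o β) l i j := by
  simp only [isCycle_colorClass_iff, h, true_and]
  constructor
  · intro halt
    have : NeZero l := ⟨by have := h.1; omega⟩
    have hconst (t : ℕ) : o (i t, j t) = o (i 0, j 0) := by
      induction t with
      | zero => simp
      | succ t ih =>
        rw [Nat.cast_succ, (halt _).2, add_sub_cancel_right, ← (halt _).1, ih]
    have hconst' (t : ZMod l) : o (i t, j t) = o (i 0, j 0) := by
      simpa using hconst t.val
    exact ⟨o (i 0, j 0), fun t => ⟨hconst' t, (halt t).1 ▸ hconst' t⟩⟩
  · rintro ⟨β, hβ⟩ t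
    refine ⟨(hβ t).1.trans (hβ t).2.symm, (hβ t).1.trans ?_⟩
    simpa using (hβ (t - 1)).2.symm

theorem goodOrientation_iff (k : Type*) [Field k] :
    GoodOrientation E o ↔
      DirectedCycleFree E o ∧ ∀ β, balancedMatrices k (colorClass E o β) = ⊥ := by
  simp only [GoodOrientation, DirectedCycleFree, balancedMatrices_eq_bot_iff]
  constructor
  · intro h
    refine ⟨fun l i j hE => (h l i j hE).1, fun β l i j hβ => ?_⟩
    have hE := (isCycle_colorClass_iff.1 hβ).1
    exact (h l i j hE).2 ((alternating_iff_exists_isCycle_colorClass hE).2 ⟨β, hβ⟩)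
  · rintro ⟨hdir, hmono⟩ l i j hE
    refine ⟨hdir l i j hE, fun halt => ?_⟩
    obtain ⟨β, hβ⟩ := (alternating_iff_exists_isCycle_colorClass hE).1 halt
    exact hmono β l i j hβ

/-- The orientation of all edges from the endpoint that comes first in `l` to the other one. -/
def orderOrientation (l : List (Fin m ⊕ Fin n)) (e : Fin m × Fin n) : Bool :=
  l.idxOf (Sum.inl e.1) < l.idxOf (Sum.inr e.2)

lemma directedCycleFree_orderOrientation (E : Set (Fin m × Fin n)) (l : List (Fin m ⊕ Fin n)) :
    DirectedCycleFree E (orderOrientation l) := by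
  intro d i j hE
  have : NeZero d := ⟨by have := hE.1; omega⟩
  simp only [orderOrientation, decide_eq_true_eq, decide_eq_false_iff_not, not_lt, not_or]
  constructor <;> intro hdir
  · obtain ⟨t, ht⟩ := Finite.exists_max fun t => l.idxOf (Sum.inl (i t) : Fin m ⊕ Fin n)
    exact ((hdir t).1.trans_le (hdir t).2).not_ge (ht (t + 1))
  · obtain ⟨t, ht⟩ := Finite.exists_min fun t => l.idxOf (Sum.inl (i t) : Fin m ⊕ Fin n)
    exact ((hdir t).2.trans_le (hdir t).1).not_ge (ht (t + 1))

/-- The arcs of the digraph obtained from `E` by the orientation `o`. -/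
def Arc (E : Set (Fin m × Fin n)) (o : Fin m × Fin n → Bool) : Fin m ⊕ Fin n → Fin m ⊕ Fin n → Prop
  | .inl i, .inr j => (i, j) ∈ E ∧ o (i, j) = true
  | .inr j, .inl i => (i, j) ∈ E ∧ o (i, j) = false
  | _, _ => False

lemma arc_inl_right_iff {x : Fin m ⊕ Fin n} {i : Fin m} :
    Arc E o x (.inl i) ↔ ∃ j, x = .inr j ∧ (i, j) ∈ E ∧ o (i, j) = false := by
  cases x <;> simp [Arc]

lemma arc_inr_right_iff {x : Fin m ⊕ Fin n} {j : Fin n} :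
    Arc E o x (.inr j) ↔ ∃ i, x = .inl i ∧ (i, j) ∈ E ∧ o (i, j) = true := by
  cases x <;> simp [Arc]

lemma exists_alternating_chain {f : ℕ → Fin m ⊕ Fin n} (hf : ∀ t, Arc E o (f (t + 1)) (f t)) :
    ∃ (a : ℕ → Fin m) (b : ℕ → Fin n), (∀ t, (a t, b t) ∈ E ∧ o (a t, b t) = false) ∧
      ∀ t, (a (t + 1), b t) ∈ E ∧ o (a (t + 1), b t) = true := by
  obtain ⟨s, hs⟩ : ∃ s, ∃ i, f s = .inl i := by
    rcases h : f 0 with i | j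
    · exact ⟨0, i, h⟩
    · obtain ⟨i, hi, -⟩ := arc_inr_right_iff.1 (h ▸ hf 0)
      exact ⟨1, i, hi⟩
  have hinl (t : ℕ) : ∃ i, f (s + 2 * t) = .inl i := by
    induction t with
    | zero => exact hs
    | succ t ih =>
      obtain ⟨i, hi⟩ := ih
      obtain ⟨j, hj, -⟩ := arc_inl_right_iff.1 (hi ▸ hf (s + 2 * t))
      obtain ⟨i', hi', -⟩ := arc_inr_right_iff.1 (hj ▸ hf (s + 2 * t + 1))
      exact ⟨i', hi'⟩
  choose a ha using hinl
  have hodd (t : ℕ) := arc_inl_right_iff.1 (ha t ▸ hf (s + 2 * t))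
  choose b hb hab using hodd
  refine ⟨a, b, hab, fun t => ?_⟩
  obtain ⟨i, hi, h⟩ := arc_inr_right_iff.1 (hb t ▸ hf (s + 2 * t + 1))
  rwa [show i = a (t + 1) from Sum.inl_injective (hi.symm.trans (ha (t + 1)))] at h

lemma DirectedCycleFree.wellFounded_arc (h : DirectedCycleFree E o) : WellFounded (Arc E o) := by
  refine wellFounded_iff_isEmpty_descending_chain.2 ⟨fun ⟨f, hf⟩ => ?_⟩
  obtain ⟨a, b, hab, hba⟩ := exists_alternating_chain hf
  obtain ⟨l, i, j, hl, hi, hj, hij, hji⟩ := exists_cycle_of_walk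
    (P := fun i j => (i, j) ∈ E ∧ o (i, j) = false)
    (Q := fun i j => (i, j) ∈ E ∧ o (i, j) = true) hab hba
    (fun t heq => by simpa [heq, (hab t).2] using (hba t).2)
    (fun t heq => by simpa [← heq, (hab (t + 1)).2] using (hba t).2)
  exact h l i j ⟨hl, hi, hj, fun t => (hij t).1, fun t => (hji t).1⟩
    (.inr fun t => ⟨(hij t).2, (hji t).2⟩)

lemma exists_list_idxOf_lt_of_wellFounded {V : Type*} [Finite V] [BEq V] [LawfulBEq V]
    {r : V → V → Prop} (hr : WellFounded r) :
    ∃ l : List V, l.Nodup ∧ (∀ v, v ∈ l) ∧ ∀ v w, r v w → l.idxOf v < l.idxOf w := by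
  have := Fintype.ofFinite V
  have : IsWellFounded V r := ⟨hr⟩
  let le (v w : V) : Prop := IsWellFounded.rank r v ≤ IsWellFounded.rank r w
  have : Std.Total le := ⟨fun _ _ => le_total _ _⟩
  have : IsTrans V le := ⟨fun _ _ _ => le_trans⟩
  let l := (Finset.univ : Finset V).toList.insertionSort le
  have hperm : l.Perm Finset.univ.toList := List.perm_insertionSort le _
  have hmem (v : V) : v ∈ l := hperm.mem_iff.2 (by simp)
  refine ⟨l, hperm.nodup_iff.2 (Finset.nodup_toList _), hmem, fun v w hvw => ?_⟩
  have hrank := IsWellFounded.rank_lt_of_rel hvw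
  by_contra! hidx
  obtain heq | hlt := hidx.eq_or_lt
  · exact hrank.ne (by rw [(List.idxOf_inj (hmem w)).1 heq])
  · have := (List.pairwise_iff_getElem.1 (List.pairwise_insertionSort le _)) _ _
      (List.idxOf_lt_length_of_mem (hmem w)) (List.idxOf_lt_length_of_mem (hmem v)) hlt
    exact hrank.not_ge (by simpa [l, le] using this)

lemma DirectedCycleFree.exists_colorClass_orderOrientation_eq (h : DirectedCycleFree E o) :
    ∃ l : List (Fin m ⊕ Fin n), l.Nodup ∧ (∀ v, v ∈ l) ∧
      colorClass E (orderOrientation l) = colorClass E o := by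
  obtain ⟨l, hl, hmem, hlt⟩ := exists_list_idxOf_lt_of_wellFounded h.wellFounded_arc
  refine ⟨l, hl, hmem, ?_⟩
  ext β ⟨i, j⟩
  refine and_congr_right fun hE => ?_
  suffices orderOrientation l (i, j) = o (i, j) by rw [this]
  cases ho : o (i, j)
  · simpa [orderOrientation] using (hlt (.inr j) (.inl i) ⟨hE, ho⟩).le
  · simpa [orderOrientation] using hlt (.inl i) (.inr j) ⟨hE, ho⟩

theorem exists_goodOrientation_iff (k : Type*) [Field k] :
    (∃ o, GoodOrientation E o) ↔ ∃ l : List (Fin m ⊕ Fin n), l.Nodup ∧ (∀ v, v ∈ l) ∧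
      ∀ β, balancedMatrices k (colorClass E (orderOrientation l) β) = ⊥ := by
  simp only [goodOrientation_iff k]
  constructor
  · rintro ⟨o, hdir, hmono⟩
    obtain ⟨l, hl, hmem, heq⟩ := hdir.exists_colorClass_orderOrientation_eq
    exact ⟨l, hl, hmem, heq ▸ hmono⟩
  · rintro ⟨l, -, -, hmono⟩
    exact ⟨orderOrientation l, directedCycleFree_orderOrientation E l, hmono⟩

end Orientations

section BipartiteWeights

variable {k : Type*} [Field k] {m n : ℕ} {E : Set (Fin m × Fin n)}

/-- A matrix, read as weights on the edges of a bipartite graph, as a symmetric weight matrix. -/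
def bipartiteWeight : Matrix (Fin m) (Fin n) k →ₗ[k] Matrix (Fin m ⊕ Fin n) (Fin m ⊕ Fin n) k where
  toFun A := Matrix.fromBlocks 0 A A.transpose 0
  map_add' _ _ := by simp [Matrix.fromBlocks_add]
  map_smul' _ _ := by simp [Matrix.fromBlocks_smul]

/-- The balanced matrices supported on `E` as symmetric weight matrices. -/
def bipartiteWeights (k : Type*) [Field k] {m n : ℕ} (E : Set (Fin m × Fin n)) :
    Submodule k (Matrix (Fin m ⊕ Fin n) (Fin m ⊕ Fin n) k) :=
  (balancedMatrices k E).map bipartiteWeight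

lemma bipartiteWeight_apply (A : Matrix (Fin m) (Fin n) k) :
    bipartiteWeight A = Matrix.fromBlocks 0 A A.transpose 0 :=
  rfl

lemma bipartiteWeight_injective :
    Function.Injective (bipartiteWeight : Matrix (Fin m) (Fin n) k →ₗ[k] _) := fun _ _ h =>
  (Matrix.fromBlocks_inj.1 h).2.1

lemma isSymm_of_mem_bipartiteWeights {N : Matrix (Fin m ⊕ Fin n) (Fin m ⊕ Fin n) k}
    (hN : N ∈ bipartiteWeights k E) : N.IsSymm := by
  obtain ⟨A, -, rfl⟩ := hN
  exact Matrix.IsSymm.fromBlocks Matrix.isSymm_zero rfl Matrix.isSymm_zero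

lemma cauchySum_bipartiteWeight_eq_zero_iff {x : Fin m → k} {y : Fin n → k}
    {A : Matrix (Fin m) (Fin n) k} :
    cauchySum (Sum.elim x y) .univ (bipartiteWeight A) = 0 ↔
      (∀ i, ∑ j, A i j / (x i - y j) = 0) ∧ ∀ j, ∑ i, A i j / (y j - x i) = 0 := by
  simp [funext_iff, cauchySum_apply, bipartiteWeight_apply]

/-- The part of `A` on the edges with direction `β`. -/
def colorPart (o : Fin m × Fin n → Bool) (β : Bool) (A : Matrix (Fin m) (Fin n) k) :
    Matrix (Fin m) (Fin n) k :=
  .of fun i j => if o (i, j) = β then A i j else 0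

lemma colorPart_apply (o : Fin m × Fin n → Bool) (β : Bool) (A : Matrix (Fin m) (Fin n) k)
    (i : Fin m) (j : Fin n) : colorPart o β A i j = if o (i, j) = β then A i j else 0 :=
  rfl

lemma colorPart_true_add_colorPart_false (o : Fin m × Fin n → Bool)
    (A : Matrix (Fin m) (Fin n) k) : colorPart o true A + colorPart o false A = A := by
  ext i j
  cases h : o (i, j) <;> simp [colorPart_apply, h]

lemma colorPart_of_mem_balancedMatrices {o : Fin m × Fin n → Bool} {β γ : Bool}
    {A : Matrix (Fin m) (Fin n) k} (hA : A ∈ balancedMatrices k (colorClass E o β)) :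
    colorPart o γ A = if γ = β then A else 0 := by
  ext i j
  have hsupp : o (i, j) ≠ β → A i j = 0 := fun h => hA.1 i j fun hij => h hij.2
  by_cases hγ : γ = β <;> by_cases hβ : o (i, j) = β <;> simp_all [colorPart_apply, eq_comm]

lemma forall_colorPart_mem_iff {o : Fin m × Fin n → Bool} {A : Matrix (Fin m) (Fin n) k} :
    (∀ β, colorPart o β A ∈ balancedMatrices k (colorClass E o β)) ↔
      A ∈ balancedMatrices k E ∧ (∀ i, ∑ j, colorPart o true A i j = 0) ∧
        ∀ j, ∑ i, colorPart o false A i j = 0 := by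
  have hmono (β : Bool) : balancedMatrices k (colorClass E o β) ≤ balancedMatrices k E :=
    fun B hB => ⟨fun i j h => hB.1 i j fun h' => h h'.1, hB.2⟩
  have hsplit (i : Fin m) (j : Fin n) :
      A i j = colorPart o true A i j + colorPart o false A i j :=
    congrFun₂ (colorPart_true_add_colorPart_false o A).symm i j
  constructor
  · intro h
    refine ⟨?_, (h true).2.1, (h false).2.2⟩
    rw [← colorPart_true_add_colorPart_false o A]
    exact add_mem (hmono _ (h true)) (hmono _ (h false))
  · rintro ⟨⟨hsupp, hrow, hcol⟩, htrue, hfalse⟩ β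
    refine ⟨fun i j h => ?_, fun i => ?_, fun j => ?_⟩
    · rw [colorPart_apply, ite_eq_right_iff]
      exact fun ho => hsupp i j fun hE => h ⟨hE, ho⟩
    · have hfalse_row := hrow i
      simp only [hsplit, Finset.sum_add_distrib, htrue i, zero_add] at hfalse_row
      cases β
      exacts [hfalse_row, htrue i]
    · have htrue_col := hcol j
      simp only [hsplit, Finset.sum_add_distrib, hfalse j, add_zero] at htrue_col
      cases β
      exacts [hfalse j, htrue_col]

lemma bipartiteWeight_mem_orderedWeights_iff {l : List (Fin m ⊕ Fin n)} (hl : l.Nodup)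
    (hmem : ∀ v, v ∈ l) {A : Matrix (Fin m) (Fin n) k} :
    bipartiteWeight A ∈ orderedWeights (bipartiteWeights k E) l ↔
      ∀ β, colorPart (orderOrientation l) β A ∈
        balancedMatrices k (colorClass E (orderOrientation l) β) := by
  have hW : bipartiteWeight A ∈ bipartiteWeights k E ↔ A ∈ balancedMatrices k E :=
    bipartiteWeight_injective.mem_set_image
  have hlt (i : Fin m) (j : Fin n) :
      l.idxOf (.inl i) < l.idxOf (.inr j) ↔ orderOrientation l (i, j) = true := by
    simp [orderOrientation]
  have hgt (i : Fin m) (j : Fin n) :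
      l.idxOf (.inr j) < l.idxOf (.inl i) ↔ orderOrientation l (i, j) = false := by
    have hne : l.idxOf (.inr j) ≠ l.idxOf (.inl i) := fun h =>
      Sum.inr_ne_inl ((List.idxOf_inj (hmem _)).1 h)
    simp [orderOrientation, hne.le_iff_lt]
  rw [mem_orderedWeights_iff_of_forall_mem hl hmem, forall_colorPart_mem_iff, hW]
  simp [Finset.sum_filter, bipartiteWeight_apply, hlt, hgt, colorPart_apply]

theorem orderedWeights_bipartiteWeights_eq_bot_iff {l : List (Fin m ⊕ Fin n)} (hl : l.Nodup)
    (hmem : ∀ v, v ∈ l) :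
    orderedWeights (bipartiteWeights k E) l = ⊥ ↔
      ∀ β, balancedMatrices k (colorClass E (orderOrientation l) β) = ⊥ := by
  simp only [Submodule.eq_bot_iff]
  constructor
  · intro h β A hA
    refine bipartiteWeight_injective ((h _ ?_).trans (map_zero _).symm)
    refine (bipartiteWeight_mem_orderedWeights_iff hl hmem).2 fun γ => ?_
    rw [colorPart_of_mem_balancedMatrices hA]
    split_ifs with hγ
    exacts [hγ ▸ hA, zero_mem _]
  · intro h N hN
    obtain ⟨A, -, rfl⟩ := orderedWeights_le _ l hN
    have hparts := (bipartiteWeight_mem_orderedWeights_iff hl hmem).1 hN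
    rw [← colorPart_true_add_colorPart_false (orderOrientation l) A, h _ _ (hparts true),
      h _ _ (hparts false), add_zero, map_zero]

theorem exists_cauchySum_bipartite_iff [Infinite k] :
    (∃ (x : Fin m → k) (y : Fin n → k), Function.Injective x ∧ Function.Injective y ∧
      (∀ i j, x i ≠ y j) ∧ ∀ A ∈ balancedMatrices k E, (∀ i, ∑ j, A i j / (x i - y j) = 0) →
        (∀ j, ∑ i, A i j / (y j - x i) = 0) → A = 0) ↔
      ∃ o, GoodOrientation E o := by
  have hlist : (∃ o, GoodOrientation E o) ↔ ∃ l : List (Fin m ⊕ Fin n), l.Nodup ∧ (∀ v, v ∈ l) ∧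
      orderedWeights (bipartiteWeights k E) l = ⊥ := by
    rw [exists_goodOrientation_iff k]
    exact exists_congr fun l => and_congr_right fun hl => and_congr_right fun hmem =>
      (orderedWeights_bipartiteWeights_eq_bot_iff hl hmem).symm
  have hweights (x : Fin m → k) (y : Fin n → k) :
      (∀ N ∈ bipartiteWeights k E, cauchySum (Sum.elim x y) .univ N = 0 → N = 0) ↔
        ∀ A ∈ balancedMatrices k E, (∀ i, ∑ j, A i j / (x i - y j) = 0) →
          (∀ j, ∑ i, A i j / (y j - x i) = 0) → A = 0 := by
    simp only [bipartiteWeights, Submodule.mem_map, forall_exists_index, and_imp,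
      forall_apply_eq_imp_iff₂, cauchySum_bipartiteWeight_eq_zero_iff,
      map_eq_zero_iff _ bipartiteWeight_injective]
  rw [hlist, ← exists_cauchySum_injective_iff fun N => isSymm_of_mem_bipartiteWeights,
    (Equiv.sumArrowEquivProdArrow _ _ _).symm.surjective.exists, Prod.exists]
  simp only [Equiv.sumArrowEquivProdArrow, Equiv.coe_fn_symm_mk, hweights, Sum.elim_injective,
    and_assoc]

end BipartiteWeights

section CheckMatrices

variable {L : Type*} [Field L] {ι κ σ τ α γ : Type*} [Fintype σ] [Fintype τ]

/-- The erasure pattern `E` is correctable for the tensor product of the codes generated by the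
columns of `X` and `Y`: a codeword `X * B * Yᵀ` that vanishes off `E` is zero. -/
def Correctable (X : Matrix ι σ L) (Y : Matrix κ τ L) (E : Set (ι × κ)) : Prop :=
  ∀ B : Matrix σ τ L, (∀ i j, (i, j) ∉ E → (X * B * Y.transpose) i j = 0) → B = 0

variable [Fintype ι] [Fintype κ] {E : Set (ι × κ)}

/-- The tensor product of the codes with check matrices `A` and `C` has no nonzero codeword
supported on `E`. -/
def CheckFree (A : Matrix α ι L) (C : Matrix γ κ L) (E : Set (ι × κ)) : Prop :=
  ∀ P : Matrix ι κ L, (∀ i j, (i, j) ∉ E → P i j = 0) →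
    A * P = 0 → P * C.transpose = 0 → P = 0

lemma mul_eq_zero_iff_exists_of_exact {ρ : Type*} {X : Matrix ι σ L} {A : Matrix α ι L}
    (h : Function.Exact X.mulVec A.mulVec) {P : Matrix ι ρ L} :
    A * P = 0 ↔ ∃ Q : Matrix σ ρ L, X * Q = P := by
  constructor
  · intro hP
    have hcol (j : ρ) : ∃ q, X.mulVec q = P.col j :=
      (h _).1 (funext fun a => congrFun₂ hP a j)
    choose Q hQ using hcol
    exact ⟨.of fun s j => Q j s, Matrix.ext fun i j => congrFun (hQ j) i⟩
  · rintro ⟨Q, rfl⟩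
    ext a j
    exact congrFun ((h _).2 ⟨Q.col j, rfl⟩) a

lemma eq_zero_of_mul_eq_zero_of_injective {ι ρ : Type*} {X : Matrix ι σ L}
    (hX : Function.Injective X.mulVec) {Q : Matrix σ ρ L} (h : X * Q = 0) : Q = 0 := by
  ext s j
  have hcol : X.mulVec (Q.col j) = X.mulVec 0 := by
    rw [Matrix.mulVec_zero]
    exact funext fun i => congrFun₂ h i j
  exact congrFun (hX hcol) s

lemma checks_eq_zero_iff_exists_of_exact {X : Matrix ι σ L} {Y : Matrix κ τ L}
    {A : Matrix α ι L} {C : Matrix γ κ L} (hX : Function.Injective X.mulVec)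
    (hXA : Function.Exact X.mulVec A.mulVec) (hYC : Function.Exact Y.mulVec C.mulVec)
    {P : Matrix ι κ L} :
    A * P = 0 ∧ P * C.transpose = 0 ↔
      ∃ B : Matrix σ τ L, X * B * Y.transpose = P := by
  constructor
  · rintro ⟨hA, hC⟩
    obtain ⟨Q, rfl⟩ := (mul_eq_zero_iff_exists_of_exact hXA).1 hA
    have hQ : Q * C.transpose = 0 :=
      eq_zero_of_mul_eq_zero_of_injective hX (by rw [← Matrix.mul_assoc, hC])
    have hQ' : C * Q.transpose = 0 := by
      simpa using congrArg Matrix.transpose hQ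
    obtain ⟨B, hB⟩ := (mul_eq_zero_iff_exists_of_exact hYC).1 hQ'
    refine ⟨B.transpose, ?_⟩
    rw [Matrix.mul_assoc, ← Matrix.transpose_mul, hB, Matrix.transpose_transpose]
  · rintro ⟨B, rfl⟩
    have hAX : A * X = 0 := (mul_eq_zero_iff_exists_of_exact hXA).2 ⟨1, Matrix.mul_one X⟩
    have hCY : C * Y = 0 := (mul_eq_zero_iff_exists_of_exact hYC).2 ⟨1, Matrix.mul_one Y⟩
    constructor
    · rw [Matrix.mul_assoc, ← Matrix.mul_assoc, hAX, Matrix.zero_mul]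
    · rw [Matrix.mul_assoc, ← Matrix.transpose_mul, hCY, Matrix.transpose_zero, Matrix.mul_zero]

theorem correctable_iff_checkFree {X : Matrix ι σ L} {Y : Matrix κ τ L}
    {A : Matrix α ι L} {C : Matrix γ κ L} (hX : Function.Injective X.mulVec)
    (hY : Function.Injective Y.mulVec) (hXA : Function.Exact X.mulVec A.mulVec)
    (hYC : Function.Exact Y.mulVec C.mulVec) :
    Correctable X Y E ↔ CheckFree A C E := by
  constructor
  · intro h P hP hA hC
    obtain ⟨B, rfl⟩ := (checks_eq_zero_iff_exists_of_exact hX hXA hYC).1 ⟨hA, hC⟩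
    rw [h B hP, Matrix.mul_zero, Matrix.zero_mul]
  · intro h B hB
    obtain ⟨hA, hC⟩ := (checks_eq_zero_iff_exists_of_exact hX hXA hYC).2 ⟨B, rfl⟩
    have hzero : X * (B * Y.transpose) = 0 := by
      rw [← Matrix.mul_assoc]
      exact h _ hB hA hC
    have hBY : Y * B.transpose = 0 := by
      simpa using congrArg Matrix.transpose (eq_zero_of_mul_eq_zero_of_injective hX hzero)
    simpa using eq_zero_of_mul_eq_zero_of_injective hY hBY

lemma CheckFree.of_mul_diagonal [DecidableEq ι] [DecidableEq κ] {A : Matrix α ι L}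
    {C : Matrix γ κ L} {d : ι → L} {e : κ → L} (hd : ∀ i, d i ≠ 0) (he : ∀ j, e j ≠ 0)
    (h : CheckFree (A * Matrix.diagonal d) (C * Matrix.diagonal e) E) : CheckFree A C E := by
  intro P hP hA hC
  let Q := Matrix.diagonal d⁻¹ * P * Matrix.diagonal e⁻¹
  have hdd : Matrix.diagonal d * Matrix.diagonal d⁻¹ = 1 := by
    simp [Matrix.diagonal_mul_diagonal, hd]
  have hee : Matrix.diagonal e⁻¹ * Matrix.diagonal e = 1 := by
    simp [Matrix.diagonal_mul_diagonal, he]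
  have hQ : Q = 0 := by
    refine h Q (fun i j hij => by simp [Q, hP i j hij]) ?_ ?_
    · calc A * Matrix.diagonal d * Q
          = A * (Matrix.diagonal d * Matrix.diagonal d⁻¹) * P * Matrix.diagonal e⁻¹ := by
            simp only [Q, Matrix.mul_assoc]
        _ = 0 := by rw [hdd, Matrix.mul_one, hA, Matrix.zero_mul]
    · calc Q * (C * Matrix.diagonal e).transpose
          = Matrix.diagonal d⁻¹ *
              (P * (Matrix.diagonal e⁻¹ * Matrix.diagonal e) * C.transpose) := by
            simp only [Q, Matrix.mul_assoc, Matrix.transpose_mul, Matrix.diagonal_transpose]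
        _ = 0 := by rw [hee, Matrix.mul_one, hC, Matrix.mul_zero]
  ext i j
  simpa [Q, hd i, he j] using congrFun₂ hQ i j

end CheckMatrices

section Moments

variable {L : Type*} [Field L] {m n : ℕ} {E : Set (Fin m × Fin n)} {x : Fin m → L} {y : Fin n → L}

/-- The check matrix whose rows are `1` and `x`. -/
def moments {ι : Type*} (x : ι → L) : Matrix (Fin 2) ι L :=
  .of ![1, x]

lemma moments_mul_eq_zero_iff {ι κ : Type*} [Fintype ι] {x : ι → L} {P : Matrix ι κ L} :
    moments x * P = 0 ↔ (∀ j, ∑ i, P i j = 0) ∧ ∀ j, ∑ i, x i * P i j = 0 := by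
  simp [← Matrix.ext_iff, Fin.forall_fin_two, moments, Matrix.vecMul, dotProduct]

lemma mul_moments_transpose_eq_zero_iff {ι κ : Type*} [Fintype κ] {y : κ → L} {P : Matrix ι κ L} :
    P * (moments y).transpose = 0 ↔ (∀ i, ∑ j, P i j = 0) ∧ ∀ i, ∑ j, y j * P i j = 0 := by
  rw [← Matrix.transpose_eq_zero, Matrix.transpose_mul, Matrix.transpose_transpose,
    moments_mul_eq_zero_iff]
  rfl

lemma checkFree_moments_iff :
    CheckFree (moments x) (moments y) E ↔
      ∀ P : Matrix (Fin m) (Fin n) L, (∀ i j, (i, j) ∉ E → P i j = 0) →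
        (∀ j, ∑ i, P i j = 0) → (∀ j, ∑ i, x i * P i j = 0) →
        (∀ i, ∑ j, P i j = 0) → (∀ i, ∑ j, y j * P i j = 0) → P = 0 := by
  simp only [CheckFree, moments_mul_eq_zero_iff, mul_moments_transpose_eq_zero_iff, and_imp]

lemma CheckFree.add_const (h : CheckFree (moments x) (moments y) E) (t : L) :
    CheckFree (moments fun i => x i + t) (moments y) E := by
  rw [checkFree_moments_iff] at h ⊢
  intro P hP hcol hxcol
  refine h P hP hcol fun j => ?_
  simpa [add_mul, Finset.sum_add_distrib, ← Finset.mul_sum, hcol j] using hxcol j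

lemma CheckFree.eq_zero_of_cauchySum (hxy : ∀ i j, x i ≠ y j)
    (h : CheckFree (moments x) (moments y) E) {A : Matrix (Fin m) (Fin n) L}
    (hA : A ∈ balancedMatrices L E) (hrow : ∀ i, ∑ j, A i j / (x i - y j) = 0)
    (hcol : ∀ j, ∑ i, A i j / (y j - x i) = 0) : A = 0 := by
  obtain ⟨hE, hArow, hAcol⟩ := mem_balancedMatrices.1 hA
  let P : Matrix (Fin m) (Fin n) L := .of fun i j => A i j / (x i - y j)
  have hAP (i : Fin m) (j : Fin n) : A i j = (x i - y j) * P i j :=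
    (mul_div_cancel₀ _ (sub_ne_zero.2 (hxy i j))).symm
  have hxP (i : Fin m) (j : Fin n) : x i * P i j = A i j + y j * P i j := by
    rw [hAP]
    ring
  have hyP (i : Fin m) (j : Fin n) : y j * P i j = x i * P i j - A i j := by
    rw [hAP]
    ring
  have hProw (i : Fin m) : ∑ j, P i j = 0 := hrow i
  have hPcol (j : Fin n) : ∑ i, P i j = 0 := by
    rw [← neg_eq_zero, ← hcol j, ← Finset.sum_neg_distrib]
    exact Finset.sum_congr rfl fun i _ => by rw [← neg_sub (x i), div_neg]; rfl
  have hP : P = 0 := by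
    refine checkFree_moments_iff.1 h P (fun i j hij => by simp [P, hE i j hij]) hPcol
      (fun j => ?_) hProw fun i => ?_
    · simp only [hxP, Finset.sum_add_distrib, ← Finset.mul_sum, hPcol, hAcol, mul_zero, add_zero]
    · simp only [hyP, Finset.sum_sub_distrib, ← Finset.mul_sum, hProw, hArow, mul_zero, sub_zero]
  ext i j
  rw [hAP, hP, Matrix.zero_apply, mul_zero]

lemma checkFree_moments_of_cauchySum (hxy : ∀ i j, x i ≠ y j)
    (h : ∀ A ∈ balancedMatrices L E, (∀ i, ∑ j, A i j / (x i - y j) = 0) →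
      (∀ j, ∑ i, A i j / (y j - x i) = 0) → A = 0) :
    CheckFree (moments x) (moments y) E := by
  refine checkFree_moments_iff.2 fun P hP hcol hxcol hrow hyrow => ?_
  have hxy' (i : Fin m) (j : Fin n) : x i - y j ≠ 0 := sub_ne_zero.2 (hxy i j)
  let A : Matrix (Fin m) (Fin n) L := .of fun i j => x i * P i j - y j * P i j
  have hAP (i : Fin m) (j : Fin n) : A i j = (x i - y j) * P i j := (sub_mul _ _ _).symm
  have hA : A ∈ balancedMatrices L E := by
    refine mem_balancedMatrices.2 ⟨fun i j hij => by simp [A, hP i j hij], fun i => ?_, fun j => ?_⟩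
    · simp [A, Finset.sum_sub_distrib, ← Finset.mul_sum, hrow, hyrow]
    · simp [A, Finset.sum_sub_distrib, ← Finset.mul_sum, hcol, hxcol]
  have hA0 : A = 0 := by
    refine h A hA (fun i => ?_) fun j => ?_
    · simpa only [hAP, mul_div_cancel_left₀ _ (hxy' i _)] using hrow i
    · have hneg (i : Fin m) : A i j / (y j - x i) = -P i j := by
        rw [← neg_sub (x i), div_neg, hAP, mul_div_cancel_left₀ _ (hxy' i j)]
      simp only [hneg, Finset.sum_neg_distrib, hcol, neg_zero]
  ext i j
  exact (mul_eq_zero.1 ((hAP i j).symm.trans (congrFun₂ hA0 i j))).resolve_left (hxy' i j)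

theorem exists_checkFree_moments_iff [Infinite L] :
    (∃ (x : Fin m → L) (y : Fin n → L), Function.Injective x ∧ Function.Injective y ∧
      CheckFree (moments x) (moments y) E) ↔ ∃ o, GoodOrientation E o := by
  rw [← exists_cauchySum_bipartite_iff (k := L)]
  constructor
  · rintro ⟨x, y, hx, hy, h⟩
    obtain ⟨t, ht⟩ := Infinite.exists_notMem_finset
      (Finset.univ.image fun p : Fin m × Fin n => y p.2 - x p.1)
    have hdisj (i : Fin m) (j : Fin n) : x i + t ≠ y j := fun hij =>
      ht (Finset.mem_image.2 ⟨(i, j), Finset.mem_univ _, by simp [← hij]⟩)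
    exact ⟨fun i => x i + t, y, (add_left_injective t).comp hx, hy, hdisj,
      fun A hA => (h.add_const t).eq_zero_of_cauchySum hdisj hA⟩
  · rintro ⟨x, y, hx, hy, hdisj, h⟩
    exact ⟨x, y, hx, hy, checkFree_moments_of_cauchySum hdisj h⟩

end Moments

section GeneralPosition

variable {L : Type*} [Field L] {ι σ : Type*} [Fintype ι] [Fintype σ]

/-- The columns of `X` generate a maximum distance separable code: a nonzero codeword has fewer
zeros than the dimension of the code. -/
def IsMDS (X : Matrix ι σ L) : Prop :=
  ∀ g ≠ 0, Finset.card {i | X.mulVec g i = 0} < Fintype.card σ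

lemma isMDS_of_forall_det_ne_zero [DecidableEq σ] {X : Matrix ι σ L}
    (h : ∀ f : σ ↪ ι, (X.submatrix f id).det ≠ 0) : IsMDS X := by
  intro g hg
  by_contra! hcard
  have hcard' : Fintype.card σ ≤ Fintype.card {i // X.mulVec g i = 0} := by
    rwa [Fintype.card_subtype]
  obtain ⟨f⟩ := Function.Embedding.nonempty_of_card_le hcard'
  refine hg (Matrix.eq_zero_of_mulVec_eq_zero (h (f.trans (.subtype _))) ?_)
  exact funext fun k => (f k).2

lemma isMDS_map_mvPolynomialX {R : Type*} [CommRing R] [Nontrivial R]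
    {ψ : MvPolynomial (ι × σ) R →+* L} (hψ : Function.Injective ψ) :
    IsMDS ((Matrix.mvPolynomialX ι σ R).map ψ) := by
  refine isMDS_of_forall_det_ne_zero fun f => ?_
  let ρ := MvPolynomial.rename (R := R) (Prod.map f (id : σ → σ))
  have hρ : Function.Injective ρ :=
    MvPolynomial.rename_injective _ (f.injective.prodMap Function.injective_id)
  have hsub : ((Matrix.mvPolynomialX ι σ R).map ψ).submatrix f id =
      (ψ.comp ρ.toRingHom).mapMatrix (Matrix.mvPolynomialX σ σ R) := by
    ext
    simp [ρ]
  rw [hsub, ← RingHom.map_det]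
  exact (map_ne_zero_iff (ψ.comp ρ.toRingHom) (hψ.comp hρ)).2
    (Matrix.det_mvPolynomialX_ne_zero σ R)

lemma IsMDS.mulVec_injective {X : Matrix ι σ L} (hX : IsMDS X)
    (hcard : Fintype.card σ ≤ Fintype.card ι) : Function.Injective X.mulVec := by
  refine (injective_iff_map_eq_zero X.mulVecLin).2 fun g hg => ?_
  by_contra hne
  refine (hX g hne).not_ge ?_
  simpa [show X.mulVec g = 0 from hg] using hcard

lemma exists_exact_mulVec_of_injective {c : ℕ} {X : Matrix ι σ L}
    (hX : Function.Injective X.mulVec) (hcard : Fintype.card ι = Fintype.card σ + c) :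
    ∃ A : Matrix (Fin c) ι L, Function.Exact X.mulVec A.mulVec := by
  let W := LinearMap.range X.mulVecLin
  have hW : Module.finrank L W = Fintype.card σ := by
    rw [LinearMap.finrank_range_of_inj hX, Module.finrank_fintype_fun_eq_card]
  have hquot : Module.finrank L ((ι → L) ⧸ W) = c := by
    have := W.finrank_quotient_add_finrank
    rw [hW, Module.finrank_fintype_fun_eq_card] at this
    omega
  let e := (Module.finBasisOfFinrankEq L _ hquot).equivFun
  refine ⟨LinearMap.toMatrix' (e.toLinearMap ∘ₗ W.mkQ), fun v => ?_⟩
  rw [LinearMap.toMatrix'_mulVec]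
  simp [W]

lemma exists_exact_mulVec_of_surjective {c s : ℕ} {A : Matrix (Fin c) ι L}
    (hA : Function.Surjective A.mulVec) (hcard : Fintype.card ι = s + c) :
    ∃ X : Matrix ι (Fin s) L, Function.Injective X.mulVec ∧ Function.Exact X.mulVec A.mulVec := by
  let W := LinearMap.ker A.mulVecLin
  have hW : Module.finrank L W = s := by
    have : _ + Module.finrank L W = _ := A.mulVecLin.finrank_range_add_finrank_ker
    rw [LinearMap.range_eq_top.2 hA, finrank_top, Module.finrank_fintype_fun_eq_card,
      Module.finrank_fintype_fun_eq_card, Fintype.card_fin] at this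
    omega
  let e := (Module.finBasisOfFinrankEq L _ hW).equivFun.symm
  have hmul (v : Fin s → L) :
      (LinearMap.toMatrix' (W.subtype ∘ₗ e.toLinearMap)).mulVec v = e v :=
    LinearMap.toMatrix'_mulVec _ v
  refine ⟨LinearMap.toMatrix' (W.subtype ∘ₗ e.toLinearMap), fun v w hvw => ?_, fun v => ?_⟩
  · rw [hmul, hmul] at hvw
    exact e.injective (Subtype.ext hvw)
  · constructor
    · intro hv
      exact ⟨e.symm ⟨v, hv⟩, by rw [hmul, e.apply_symm_apply]⟩
    · rintro ⟨w, rfl⟩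
      rw [hmul]
      exact (e w).2

lemma IsMDS.eq_of_minor_eq_zero {X : Matrix ι σ L} (hX : IsMDS X)
    (hcard : Fintype.card ι = Fintype.card σ + 2) {A : Matrix (Fin 2) ι L}
    (hXA : Function.Exact X.mulVec A.mulVec) {i i' : ι}
    (h : A 0 i * A 1 i' = A 1 i * A 0 i') : i = i' := by
  by_contra hne
  have hdet : !![A 0 i, A 0 i'; A 1 i, A 1 i'].det = 0 := by
    rw [Matrix.det_fin_two_of, h]
    ring
  obtain ⟨w, hw, hMw⟩ := Matrix.exists_mulVec_eq_zero_iff.2 hdet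
  let v : ι → L := Pi.single i (w 0) + Pi.single i' (w 1)
  have hvi : v i = w 0 := by simp [v, hne]
  have hvi' : v i' = w 1 := by simp [v, Ne.symm hne]
  have hAv : A.mulVec v = 0 := by
    rw [← hMw]
    ext a
    fin_cases a <;>
      simp [v, Matrix.mulVec, dotProduct, mul_add, Finset.sum_add_distrib, Pi.single_apply]
  obtain ⟨g, hg⟩ := (hXA v).1 hAv
  have hg0 : g ≠ 0 := by
    rintro rfl
    rw [Matrix.mulVec_zero] at hg
    refine hw (funext (Fin.forall_fin_two.2 ⟨?_, ?_⟩))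
    · rw [← hvi, ← hg, Pi.zero_apply, Pi.zero_apply]
    · rw [← hvi', ← hg, Pi.zero_apply, Pi.zero_apply]
  have hzeros : ({i, i'} : Finset ι)ᶜ ⊆ ({a | X.mulVec g a = 0} : Finset ι) := by
    intro a ha
    simp only [Finset.mem_compl, Finset.mem_insert, Finset.mem_singleton, not_or] at ha
    simp [hg, v, ha.1, ha.2]
  have hle := Finset.card_le_card hzeros
  rw [Finset.card_compl, Finset.card_pair hne] at hle
  have := hX g hg0
  omega

lemma exists_forall_add_mul_ne_zero [Infinite L] {κ : Type*} [Finite κ] {a b : κ → L}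
    (h : ∀ i, a i ≠ 0 ∨ b i ≠ 0) :
    ∃ t, ∀ i, a i + t * b i ≠ 0 := by
  have := Fintype.ofFinite κ
  obtain ⟨t, ht⟩ := Infinite.exists_notMem_finset (Finset.univ.image fun i => -a i / b i)
  refine ⟨t, fun i hi => ?_⟩
  rcases eq_or_ne (b i) 0 with hb | hb
  · refine (h i).elim (fun ha => ha ?_) fun hb' => hb' hb
    simpa [hb] using hi
  · refine ht (Finset.mem_image.2 ⟨i, Finset.mem_univ _, ?_⟩)
    rw [div_eq_iff hb]
    linear_combination -hi

lemma exists_moments_mulVec_eq_zero_iff [Infinite L] [DecidableEq ι] [Nontrivial ι]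
    {A : Matrix (Fin 2) ι L}
    (hA : ∀ i i', A 0 i * A 1 i' = A 1 i * A 0 i' → i = i') :
    ∃ x d : ι → L, Function.Injective x ∧ (∀ i, d i ≠ 0) ∧
      ∀ v, (moments x * Matrix.diagonal d).mulVec v = 0 ↔ A.mulVec v = 0 := by
  have hcol (i : ι) : A 0 i ≠ 0 ∨ A 1 i ≠ 0 := by
    by_contra! hi
    obtain ⟨i', hi'⟩ := exists_ne i
    exact hi' (hA i i' (by rw [hi.1, hi.2, zero_mul, zero_mul])).symm
  obtain ⟨t, ht⟩ := exists_forall_add_mul_ne_zero hcol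
  let d (i : ι) : L := A 0 i + t * A 1 i
  let x (i : ι) : L := A 1 i / d i
  have hxd (i : ι) : x i * d i = A 1 i := div_mul_cancel₀ _ (ht i)
  refine ⟨x, d, fun i i' hii' => ?_, ht, fun v => ?_⟩
  · rw [div_eq_div_iff (ht i) (ht i')] at hii'
    exact hA i i' (by linear_combination -hii')
  · have h0 : (moments x * Matrix.diagonal d).mulVec v 0 = A.mulVec v 0 + t * A.mulVec v 1 := by
      simp [moments, d, Matrix.mulVec, dotProduct, add_mul, Finset.sum_add_distrib,
        Finset.mul_sum, mul_assoc]
    have h1 : (moments x * Matrix.diagonal d).mulVec v 1 = A.mulVec v 1 := by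
      simp [moments, hxd, Matrix.mulVec, dotProduct]
    simp only [funext_iff, Fin.forall_fin_two, h0, h1, Pi.zero_apply]
    exact and_congr_left fun h => by rw [h, mul_zero, add_zero]

lemma moments_mulVec_surjective [Nontrivial ι] {x : ι → L} (hx : Function.Injective x) :
    Function.Surjective (moments x).mulVec := by
  intro b
  obtain ⟨i, i', hne⟩ := exists_pair_ne ι
  have hsub : x i - x i' ≠ 0 := sub_ne_zero.2 (hx.ne hne)
  refine ⟨Pi.single i ((b 1 - x i' * b 0) / (x i - x i')) +
    Pi.single i' ((x i * b 0 - b 1) / (x i - x i')), ?_⟩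
  rw [Matrix.mulVec_add, Matrix.mulVec_single, Matrix.mulVec_single]
  refine funext (Fin.forall_fin_two.2 ⟨?_, ?_⟩) <;>
    simp only [moments, Matrix.col_apply, Matrix.of_apply, Pi.add_apply, Pi.smul_apply,
      MulOpposite.smul_eq_mul_unop, MulOpposite.unop_op, Matrix.cons_val_zero,
      Matrix.cons_val_one, Pi.one_apply] <;>
    field_simp <;> ring

lemma IsMDS.exists_exact_moments [Infinite L] [DecidableEq ι] {X : Matrix ι σ L} (hX : IsMDS X)
    (hcard : Fintype.card ι = Fintype.card σ + 2) :
    ∃ x d : ι → L, Function.Injective x ∧ (∀ i, d i ≠ 0) ∧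
      Function.Exact X.mulVec (moments x * Matrix.diagonal d).mulVec := by
  have : Nontrivial ι := Fintype.one_lt_card_iff_nontrivial.1 (by omega)
  obtain ⟨A, hXA⟩ :=
    exists_exact_mulVec_of_injective (hX.mulVec_injective (by omega)) hcard
  obtain ⟨x, d, hx, hd, hker⟩ :=
    exists_moments_mulVec_eq_zero_iff fun i i' => hX.eq_of_minor_eq_zero hcard hXA
  exact ⟨x, d, hx, hd, fun v => (hker v).trans (hXA v)⟩

variable {m n s r : ℕ} {E : Set (Fin m × Fin n)}

theorem Correctable.exists_goodOrientation [Infinite L] {X : Matrix (Fin m) (Fin s) L}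
    {Y : Matrix (Fin n) (Fin r) L} (hX : IsMDS X) (hY : IsMDS Y) (hm : m = s + 2) (hn : n = r + 2)
    (h : Correctable X Y E) : ∃ o, GoodOrientation E o := by
  obtain ⟨x, d, hx, hd, hXx⟩ := hX.exists_exact_moments (by simpa using hm)
  obtain ⟨y, e, hy, he, hYy⟩ := hY.exists_exact_moments (by simpa using hn)
  have hcheck := (correctable_iff_checkFree (hX.mulVec_injective (by simp [hm]))
    (hY.mulVec_injective (by simp [hn])) hXx hYy).1 h
  exact exists_checkFree_moments_iff.1 ⟨x, y, hx, hy, hcheck.of_mul_diagonal hd he⟩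

theorem exists_correctable_of_goodOrientation [Infinite L] (hm : m = s + 2) (hn : n = r + 2)
    (h : ∃ o, GoodOrientation E o) :
    ∃ (X : Matrix (Fin m) (Fin s) L) (Y : Matrix (Fin n) (Fin r) L), Correctable X Y E := by
  have : Nontrivial (Fin m) := Fin.nontrivial_iff_two_le.2 (by omega)
  have : Nontrivial (Fin n) := Fin.nontrivial_iff_two_le.2 (by omega)
  obtain ⟨x, y, hx, hy, hcheck⟩ := (exists_checkFree_moments_iff (L := L)).2 h
  obtain ⟨X, hX, hXx⟩ :=
    exists_exact_mulVec_of_surjective (moments_mulVec_surjective hx) (by simpa using hm)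
  obtain ⟨Y, hY, hYy⟩ :=
    exists_exact_mulVec_of_surjective (moments_mulVec_surjective hy) (by simpa using hn)
  exact ⟨X, Y, (correctable_iff_checkFree hX hY hXx hYy).2 hcheck⟩

end GeneralPosition

section Specialization

lemma span_range_eq_top_iff_exists_det_ne_zero {K S ι : Type*} [Field K] [Fintype S]
    [DecidableEq S] {w : ι → S → K} :
    Submodule.span K (Set.range w) = ⊤ ↔
      ∃ a : S → ι, (Matrix.of fun t s => w (a t) s).det ≠ 0 := by
  have hdet (a : S → ι) : (Matrix.of fun t s => w (a t) s).det ≠ 0 ↔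
      LinearIndependent K (w ∘ a) := by
    rw [← isUnit_iff_ne_zero, ← Matrix.isUnit_iff_isUnit_det,
      ← Matrix.linearIndependent_rows_iff_isUnit]
    rfl
  simp only [hdet]
  constructor
  · intro h
    obtain ⟨κ, a, _, hspan, hli⟩ := exists_linearIndependent' K w
    let b := Module.Basis.mk hli (by rw [hspan, h])
    exact ⟨a ∘ (b.indexEquiv (Pi.basisFun K S)).symm, hli.comp _ (Equiv.injective _)⟩
  · rintro ⟨a, ha⟩
    rw [eq_top_iff, ← ha.span_eq_top_of_card_eq_finrank' (by simp)]
    exact Submodule.span_mono (Set.range_comp_subset_range a w)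

lemma span_range_map_eq_top_of_map_eq_top {R K L S ι : Type*} [CommRing R] [Field K] [Field L]
    [Finite S] {w : ι → S → R} (φ : R →+* L) {ψ : R →+* K} (hψ : Function.Injective ψ)
    (h : Submodule.span L (Set.range fun i => φ ∘ w i) = ⊤) :
    Submodule.span K (Set.range fun i => ψ ∘ w i) = ⊤ := by
  have := Fintype.ofFinite S
  rw [span_range_eq_top_iff_exists_det_ne_zero] at h ⊢
  obtain ⟨a, ha⟩ := h
  let M : Matrix S S R := .of fun t s => w (a t) s
  have hM : M.det ≠ 0 := by
    intro hM
    refine ha ?_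
    change (φ.mapMatrix M).det = 0
    rw [← RingHom.map_det, hM, map_zero]
  refine ⟨a, ?_⟩
  change (ψ.mapMatrix M).det ≠ 0
  rwa [← RingHom.map_det, map_ne_zero_iff ψ hψ]

lemma span_range_eq_top_iff_forall_dotProduct {K S ι : Type*} [Field K] [Fintype S]
    {w : ι → S → K} :
    Submodule.span K (Set.range w) = ⊤ ↔ ∀ b : S → K, (∀ i, w i ⬝ᵥ b = 0) → b = 0 := by
  rw [← Submodule.dualAnnihilator_eq_bot_iff, Submodule.eq_bot_iff,
    ← (dotProductEquiv K S).forall_congr_right]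
  refine forall_congr' fun b => imp_congr ?_ (dotProductEquiv K S).map_eq_zero_iff
  rw [Submodule.mem_dualAnnihilator]
  refine (Submodule.span_le (p := LinearMap.ker (dotProductEquiv K S b))).trans ?_
  simp [Set.range_subset_iff, dotProduct_comm]

variable {K : Type*} [Field K] {ι κ σ τ : Type*} [Fintype σ] [Fintype τ] {E : Set (ι × κ)}

lemma correctable_iff_span_eq_top {X : Matrix ι σ K} {Y : Matrix κ τ K} :
    Correctable X Y E ↔ Submodule.span K
      (Set.range fun (e : ↥Eᶜ) (kl : σ × τ) => X e.1.1 kl.1 * Y e.1.2 kl.2) = ⊤ := by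
  rw [span_range_eq_top_iff_forall_dotProduct, ← (Equiv.curry σ τ K).symm.forall_congr_right]
  have hentry (B : Matrix σ τ K) (i : ι) (j : κ) :
      (fun kl : σ × τ => X i kl.1 * Y j kl.2) ⬝ᵥ (Equiv.curry σ τ K).symm B =
        (X * B * Y.transpose) i j := by
    simp only [dotProduct, Matrix.mul_apply, Matrix.transpose_apply, Fintype.sum_prod_type_right,
      Finset.sum_mul]
    exact Finset.sum_congr rfl fun l _ => Finset.sum_congr rfl fun k _ => by
      simp only [Equiv.curry_symm_apply, Function.uncurry]
      ring
  refine forall_congr' fun B => imp_congr ?_ ?_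
  · simp only [hentry, Subtype.forall, Prod.forall, Set.mem_compl_iff]
  · exact (Equiv.apply_eq_iff_eq _).symm

theorem Correctable.of_specialization {R L : Type*} [CommRing R] [Field L]
    {X : Matrix ι σ R} {Y : Matrix κ τ R} (φ : R →+* L) {ψ : R →+* K}
    (hψ : Function.Injective ψ) (h : Correctable (X.map φ) (Y.map φ) E) :
    Correctable (X.map ψ) (Y.map ψ) E := by
  rw [correctable_iff_span_eq_top] at h ⊢
  let w (e : ↥Eᶜ) (kl : σ × τ) : R := X e.1.1 kl.1 * Y e.1.2 kl.2
  simpa [Function.comp_def, w] using span_range_map_eq_top_of_map_eq_top (w := w) φ hψ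
    (by simpa [Function.comp_def, w] using h)

/-- The matrix with rows `u_1, …, u_m`, before passing to the fraction field. -/
def genericLeft (F : Type*) [Field F] (m n s r : ℕ) :
    Matrix (Fin m) (Fin s) (MvPolynomial ((Fin m × Fin s) ⊕ (Fin n × Fin r)) F) :=
  (Matrix.mvPolynomialX (Fin m) (Fin s) F).map (MvPolynomial.rename Sum.inl)

/-- The matrix with rows `v_1, …, v_n`, before passing to the fraction field. -/
def genericRight (F : Type*) [Field F] (m n s r : ℕ) :
    Matrix (Fin n) (Fin r) (MvPolynomial ((Fin m × Fin s) ⊕ (Fin n × Fin r)) F) :=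
  (Matrix.mvPolynomialX (Fin n) (Fin r) F).map (MvPolynomial.rename Sum.inr)

variable {F : Type*} [Field F] {m n s r : ℕ} {E : Set (Fin m × Fin n)}

lemma tensorSpanning_compl_iff_correctable :
    TensorSpanning F m n s r Eᶜ ↔
      Correctable ((genericLeft F m n s r).map (algebraMap _ (TField F m n s r)))
        ((genericRight F m n s r).map (algebraMap _ (TField F m n s r))) E := by
  rw [correctable_iff_span_eq_top, TensorSpanning, Set.image_eq_range]
  simp only [genericLeft, genericRight, Matrix.map_apply, Matrix.mvPolynomialX_apply,
    MvPolynomial.rename_X]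
  rfl

lemma isMDS_map_genericLeft {L : Type*} [Field L]
    {ψ : MvPolynomial ((Fin m × Fin s) ⊕ (Fin n × Fin r)) F →+* L} (hψ : Function.Injective ψ) :
    IsMDS ((genericLeft F m n s r).map ψ) := by
  rw [genericLeft, Matrix.map_map]
  exact isMDS_map_mvPolynomialX (ψ := ψ.comp (MvPolynomial.rename Sum.inl).toRingHom)
    (hψ.comp (MvPolynomial.rename_injective _ Sum.inl_injective))

lemma isMDS_map_genericRight {L : Type*} [Field L]
    {ψ : MvPolynomial ((Fin m × Fin s) ⊕ (Fin n × Fin r)) F →+* L} (hψ : Function.Injective ψ) :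
    IsMDS ((genericRight F m n s r).map ψ) := by
  rw [genericRight, Matrix.map_map]
  exact isMDS_map_mvPolynomialX (ψ := ψ.comp (MvPolynomial.rename Sum.inr).toRingHom)
    (hψ.comp (MvPolynomial.rename_injective _ Sum.inr_injective))

lemma Correctable.tensorSpanning_compl {L : Type*} [Field L] [Algebra F L]
    {X : Matrix (Fin m) (Fin s) L} {Y : Matrix (Fin n) (Fin r) L} (h : Correctable X Y E) :
    TensorSpanning F m n s r Eᶜ := by
  let φ := (MvPolynomial.aeval (R := F) (Sum.elim (fun p : Fin m × Fin s => X p.1 p.2)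
    fun p : Fin n × Fin r => Y p.1 p.2)).toRingHom
  have hX : (genericLeft F m n s r).map φ = X := by
    ext
    simp [genericLeft, φ]
  have hY : (genericRight F m n s r).map φ = Y := by
    ext
    simp [genericRight, φ]
  rw [← hX, ← hY] at h
  exact tensorSpanning_compl_iff_correctable.2
    (h.of_specialization φ (IsFractionRing.injective _ _))

end Specialization

theorem correctable_iff_orientation (F : Type*) [Field F] (m n : ℕ) (hm : 2 ≤ m) (hn : 2 ≤ n)
    (E : Set (Fin m × Fin n)) :
    TensorSpanning F m n (m - 2) (n - 2) Eᶜ ↔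
      ∃ o : Fin m × Fin n → Bool, GoodOrientation E o := by
  have hm' : m = m - 2 + 2 := (Nat.sub_add_cancel hm).symm
  have hn' : n = n - 2 + 2 := (Nat.sub_add_cancel hn).symm
  constructor
  · intro h
    let R := MvPolynomial ((Fin m × Fin (m - 2)) ⊕ (Fin n × Fin (n - 2))) F
    let K := TField F m n (m - 2) (n - 2)
    -- `K` itself may be finite: it is `F` when `m = n = 2`.
    let ψ : R →+* AlgebraicClosure K := (algebraMap K _).comp (algebraMap R K)
    have hψ : Function.Injective ψ :=
      (algebraMap K _).injective.comp (IsFractionRing.injective R K)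
    have hcorr := (tensorSpanning_compl_iff_correctable.1 h).of_specialization (algebraMap R K) hψ
    exact hcorr.exists_goodOrientation (isMDS_map_genericLeft hψ) (isMDS_map_genericRight hψ)
      hm' hn'
  · intro h
    obtain ⟨X, Y, hXY⟩ := exists_correctable_of_goodOrientation (L := AlgebraicClosure F) hm' hn' h
    exact hXY.tensorSpanning_compl
end
end

section
/- Let E = ({1,2,3}×{1,2,3} ∖ {(3,3)}) ∪ ({4,5}×{4,5}) ∪ ({6,7}×{6,7}) ⊆ [7]×[7], a set of 16 pairs. For every field K and every choice of vectors u_1, …, u_7 ∈ K^4 and v_1, …, v_7 ∈ K^4, the family of 16 vectors {u_i ⊗ v_j : (i,j) ∈ E} (where u_i ⊗ v_j ∈ K^{[4]×[4]} has (k,l)-entry u_i(k)·v_j(l)) is linearly dependent. In particular, E is not a basis of the tensor matroid T_{7,7}(4,4,p) for any characteristic p. -/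
open scoped Classical

noncomputable section

/-- The set `E = ({1,2,3}² ∖ {(3,3)}) ∪ {4,5}² ∪ {6,7}² ⊆ [7]×[7]` (written here with
`Fin 7` zero-indexed: `({0,1,2}² ∖ {(2,2)}) ∪ {3,4}² ∪ {5,6}²`), a set of 16 pairs. -/
def E77 : Set (Fin 7 × Fin 7) :=
  {p | (p.1.val ≤ 2 ∧ p.2.val ≤ 2 ∧ ¬(p.1.val = 2 ∧ p.2.val = 2)) ∨
       ((p.1.val = 3 ∨ p.1.val = 4) ∧ (p.2.val = 3 ∨ p.2.val = 4)) ∨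
       ((p.1.val = 5 ∨ p.1.val = 6) ∧ (p.2.val = 5 ∨ p.2.val = 6))}

/-!
Independence of 16 vectors in the 16-dimensional space `V ⊗ W` means that they span it, so it
suffices to find a nonzero bilinear form that vanishes on `U i × T i` for each of the three blocks,
where `U i` and `T i` are the spans of the `u`'s and `v`'s of block `i`. By dimension there are
functionals `f, g ≠ 0` killing `U 0` and `T 0`. If `U 1 ⊕ U 2 = V` and `T 1 ⊕ T 2 = W`, with
projections `p` onto `U 1` and `q` onto `T 1`, then `(f ∘ p) ⊗ g - f ⊗ (g ∘ q)` vanishes on all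
three blocks, and it is nonzero unless `f` kills `U 1` or `g` kills `T 2`. In these exceptional
cases, and when one of the two sums is not the whole space, a rank-one form works.
-/

open scoped TensorProduct
open Module

section BlockSpan

/-- The sum of the subspaces `U i ⊗ T i` of `V ⊗ W`, taken inside `V ⊗ W` as the span of the
pure tensors with both factors in the same block `i`. -/
def blockSpan {R V W ι : Type*} [CommSemiring R] [AddCommMonoid V] [Module R V]
    [AddCommMonoid W] [Module R W] (U : ι → Submodule R V) (T : ι → Submodule R W) :
    Submodule R (V ⊗[R] W) :=
  ⨆ i, Submodule.map₂ (TensorProduct.mk R V W) (U i) (T i)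

section CommSemiring

variable {R V W ι : Type*} [CommSemiring R] [AddCommMonoid V] [Module R V]
  [AddCommMonoid W] [Module R W] {U : ι → Submodule R V} {T : ι → Submodule R W}

lemma tmul_mem_blockSpan {i : ι} {x : V} {y : W} (hx : x ∈ U i) (hy : y ∈ T i) :
    x ⊗ₜ[R] y ∈ blockSpan U T :=
  Submodule.mem_iSup_of_mem i (Submodule.apply_mem_map₂ _ hx hy)

lemma blockSpan_ne_top_of_bilin {P : Type*} [AddCommMonoid P] [Module R P]
    {B : V →ₗ[R] W →ₗ[R] P} (hB : B ≠ 0) (hvanish : ∀ i, ∀ x ∈ U i, ∀ y ∈ T i, B x y = 0) :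
    blockSpan U T ≠ ⊤ := by
  intro htop
  have hle : blockSpan U T ≤ LinearMap.ker (TensorProduct.lift B) :=
    iSup_le fun i => Submodule.map₂_le.2 fun x hx y hy => by simpa using hvanish i x hx y hy
  have hlift : TensorProduct.lift B = 0 := LinearMap.ker_eq_top.1 (top_le_iff.1 (htop ▸ hle))
  exact hB (LinearMap.ext₂ fun x y => by simpa using LinearMap.congr_fun hlift (x ⊗ₜ y))

end CommSemiring

lemma blockSpan_ne_top_of_isCompl {R V W : Type*} [CommRing R] [NoZeroDivisors R]
    [AddCommGroup V] [Module R V] [AddCommGroup W] [Module R W]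
    {U : Fin 3 → Submodule R V} {T : Fin 3 → Submodule R W} {f : V →ₗ[R] R} {g : W →ₗ[R] R}
    (hU : IsCompl (U 1) (U 2)) (hT : IsCompl (T 1) (T 2))
    (hfU₀ : U 0 ≤ LinearMap.ker f) (hgT₀ : T 0 ≤ LinearMap.ker g)
    (hfU₁ : ¬ U 1 ≤ LinearMap.ker f) (hgT₂ : ¬ T 2 ≤ LinearMap.ker g) :
    blockSpan U T ≠ ⊤ := by
  let p := (U 1).projection (U 2) hU
  let q := (T 1).projection (T 2) hT
  have hp₁ {x} (hx : x ∈ U 1) : p x = x := Submodule.projection_apply_of_mem_left hU hx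
  have hq₁ {y} (hy : y ∈ T 1) : q y = y := Submodule.projection_apply_of_mem_left hT hy
  have hp₂ {x} (hx : x ∈ U 2) : p x = 0 := (Submodule.projection_apply_eq_zero_iff hU).2 hx
  have hq₂ {y} (hy : y ∈ T 2) : q y = 0 := (Submodule.projection_apply_eq_zero_iff hT).2 hy
  let B : V →ₗ[R] W →ₗ[R] R := (f ∘ₗ p).smulRight g - f.smulRight (g ∘ₗ q)
  have hB (x y) : B x y = f (p x) * g y - f x * g (q y) := by simp [B]
  obtain ⟨a, ha, hfa⟩ := SetLike.not_le_iff_exists.1 hfU₁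
  obtain ⟨b, hb, hgb⟩ := SetLike.not_le_iff_exists.1 hgT₂
  have hBab : B a b = f a * g b := by simp [hB, hp₁ ha, hq₂ hb]
  have hB₀ : B ≠ 0 := fun h => mul_ne_zero hfa hgb (by simp [← hBab, h])
  refine blockSpan_ne_top_of_bilin hB₀ fun i x hx y hy => ?_
  rw [hB]
  fin_cases i
  · rw [LinearMap.mem_ker.1 (hfU₀ hx), LinearMap.mem_ker.1 (hgT₀ hy), mul_zero, zero_mul, sub_zero]
  · rw [hp₁ hx, hq₁ hy, sub_self]
  · rw [hp₂ hx, hq₂ hy, map_zero, map_zero, zero_mul, mul_zero, sub_zero]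

section Field

variable {K V W : Type*} [Field K] [AddCommGroup V] [Module K V] [AddCommGroup W] [Module K W]

lemma blockSpan_ne_top_of_le {ι : Type*} {U : ι → Submodule K V} {T : ι → Submodule K W}
    {P : Submodule K V} {Q : Submodule K W} (hP : P ≠ ⊤) (hQ : Q ≠ ⊤)
    (hcover : ∀ i, U i ≤ P ∨ T i ≤ Q) : blockSpan U T ≠ ⊤ := by
  obtain ⟨f, hf, hfP⟩ := P.exists_le_ker_of_lt_top hP.lt_top
  obtain ⟨g, hg, hgQ⟩ := Q.exists_le_ker_of_lt_top hQ.lt_top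
  obtain ⟨a, ha⟩ := DFunLike.ne_iff.1 hf
  obtain ⟨b, hb⟩ := DFunLike.ne_iff.1 hg
  have hfg : f.smulRight g ≠ 0 := fun h => mul_ne_zero ha hb (by
    simpa using LinearMap.congr_fun₂ h a b)
  refine blockSpan_ne_top_of_bilin hfg fun i x hx y hy => ?_
  rcases hcover i with hUP | hTQ
  · simp [LinearMap.mem_ker.1 (hfP (hUP hx))]
  · simp [LinearMap.mem_ker.1 (hgQ (hTQ hy))]

theorem blockSpan_ne_top {U : Fin 3 → Submodule K V} {T : Fin 3 → Submodule K W}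
    (hU₀ : U 0 ≠ ⊤) (hT₀ : T 0 ≠ ⊤) (hU₁ : U 1 ≠ ⊤) (hT₂ : T 2 ≠ ⊤)
    (hU : Codisjoint (U 1) (U 2) → Disjoint (U 1) (U 2))
    (hT : Codisjoint (T 1) (T 2) → Disjoint (T 1) (T 2)) : blockSpan U T ≠ ⊤ := by
  by_cases hUc : Codisjoint (U 1) (U 2)
  case neg =>
    exact blockSpan_ne_top_of_le (mt codisjoint_iff.2 hUc) hT₀ (by simp [Fin.forall_fin_succ])
  by_cases hTc : Codisjoint (T 1) (T 2)
  case neg =>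
    exact blockSpan_ne_top_of_le hU₀ (mt codisjoint_iff.2 hTc) (by simp [Fin.forall_fin_succ])
  obtain ⟨f, hf, hfU₀⟩ := (U 0).exists_le_ker_of_lt_top hU₀.lt_top
  obtain ⟨g, hg, hgT₀⟩ := (T 0).exists_le_ker_of_lt_top hT₀.lt_top
  by_cases hfU₁ : U 1 ≤ LinearMap.ker f
  · exact blockSpan_ne_top_of_le (mt LinearMap.ker_eq_top.1 hf) hT₂
      (by simp [Fin.forall_fin_succ, hfU₀, hfU₁])
  by_cases hgT₂ : T 2 ≤ LinearMap.ker g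
  · exact blockSpan_ne_top_of_le hU₁ (mt LinearMap.ker_eq_top.1 hg)
      (by simp [Fin.forall_fin_succ, hgT₀, hgT₂])
  exact blockSpan_ne_top_of_isCompl ⟨hU hUc, hUc⟩ ⟨hT hTc, hTc⟩ hfU₀ hgT₀ hfU₁ hgT₂

end Field

end BlockSpan

lemma disjoint_of_codisjoint_of_finrank_add_le {K V : Type*} [DivisionRing K]
    [AddCommGroup V] [Module K V] [FiniteDimensional K V] {A B : Submodule K V}
    (hfinrank : finrank K A + finrank K B ≤ finrank K V) (hAB : Codisjoint A B) :
    Disjoint A B := by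
  have hsum := Submodule.finrank_sup_add_finrank_inf_eq A B
  rw [hAB.eq_top, finrank_top] at hsum
  exact disjoint_iff.2 (Submodule.finrank_eq_zero.1 (by omega))

section Fiber

/-- The span of the vectors `u i` whose index `i` carries the label `b`. -/
def fiberSpan (R : Type*) {V κ β : Type*} [Semiring R] [AddCommMonoid V] [Module R V]
    (label : κ → β) (u : κ → V) (b : β) : Submodule R V :=
  Submodule.span R (Set.range fun i : {i // label i = b} => u i)

lemma mem_fiberSpan (R : Type*) {V κ β : Type*} [Semiring R] [AddCommMonoid V] [Module R V]
    (label : κ → β) (u : κ → V) (i : κ) : u i ∈ fiberSpan R label u (label i) :=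
  Submodule.subset_span ⟨⟨i, rfl⟩, rfl⟩

variable {V κ β : Type*} [Fintype κ] [DecidableEq β]

lemma finrank_fiberSpan_le (R : Type*) [Semiring R] [StrongRankCondition R] [AddCommMonoid V]
    [Module R V] (label : κ → β) (u : κ → V) (b : β) :
    finrank R (fiberSpan R label u b) ≤ Fintype.card {i // label i = b} :=
  finrank_range_le_card _

lemma fiberSpan_ne_top {R : Type*} [Semiring R] [StrongRankCondition R] [AddCommMonoid V]
    [Module R V] {label : κ → β} {u : κ → V} {b : β}
    (hcard : Fintype.card {i // label i = b} < finrank R V) : fiberSpan R label u b ≠ ⊤ := by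
  intro htop
  have hle := finrank_fiberSpan_le R label u b
  rw [htop, finrank_top] at hle
  omega

lemma disjoint_fiberSpan_of_codisjoint {K : Type*} [DivisionRing K] [AddCommGroup V] [Module K V]
    [FiniteDimensional K V] {label : κ → β} {u : κ → V} {b c : β}
    (hcard : Fintype.card {i // label i = b} + Fintype.card {i // label i = c} ≤ finrank K V)
    (hbc : Codisjoint (fiberSpan K label u b) (fiberSpan K label u c)) :
    Disjoint (fiberSpan K label u b) (fiberSpan K label u c) :=
  disjoint_of_codisjoint_of_finrank_add_le
    ((add_le_add (finrank_fiberSpan_le K label u b) (finrank_fiberSpan_le K label u c)).trans hcard)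
    hbc

end Fiber

lemma linearIndependent_tmul_iff_mul {R ι m n : Type*} [CommSemiring R] [Finite m] [Finite n]
    {x : ι → m → R} {y : ι → n → R} :
    LinearIndependent R (fun i => x i ⊗ₜ[R] y i) ↔
      LinearIndependent R (fun i (kl : m × n) => x i kl.1 * y i kl.2) := by
  let coord := ((Pi.basisFun R m).tensorProduct (Pi.basisFun R n)).equivFun
  have hcoord : (fun i (kl : m × n) => x i kl.1 * y i kl.2) =
      coord ∘ fun i => x i ⊗ₜ[R] y i := by
    ext i ⟨k, l⟩
    simp [coord, mul_comm]
  rw [hcoord]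
  exact (LinearMap.linearIndependent_iff_of_injOn coord.toLinearMap coord.injective.injOn).symm

section E77

/-- The partition `{0,1,2} ∪ {3,4} ∪ {5,6}` of `Fin 7` underlying `E77`, as a labelling. -/
def blockLabel : Fin 7 → Fin 3 := ![0, 0, 0, 1, 1, 2, 2]

lemma E77_eq_diff :
    E77 = {e : Fin 7 × Fin 7 | blockLabel e.1 = blockLabel e.2} \ {(2, 2)} := by
  ext ⟨i, j⟩
  fin_cases i <;> fin_cases j <;> simp [E77, blockLabel]

lemma card_E77 : Fintype.card E77 = 16 := by
  have hE : E77 = ↑((Finset.univ.filter fun e : Fin 7 × Fin 7 =>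
      blockLabel e.1 = blockLabel e.2).erase (2, 2)) := by
    simp [E77_eq_diff]
  rw [← Nat.card_eq_fintype_card, Nat.card_coe_set_eq, hE, Set.ncard_coe_finset]
  decide

variable {K V W : Type*} [Field K] [AddCommGroup V] [Module K V] [AddCommGroup W] [Module K W]

lemma blockSpan_fiberSpan_blockLabel_ne_top (hV : finrank K V = 4) (hW : finrank K W = 4)
    (u : Fin 7 → V) (v : Fin 7 → W) :
    blockSpan (fiberSpan K blockLabel u) (fiberSpan K blockLabel v) ≠ ⊤ := by
  have hVfin : FiniteDimensional K V := .of_finrank_pos (by omega)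
  have hWfin : FiniteDimensional K W := .of_finrank_pos (by omega)
  have hlt (b : Fin 3) : Fintype.card {i // blockLabel i = b} < 4 := by
    fin_cases b <;> decide
  have hsum : Fintype.card {i // blockLabel i = 1} + Fintype.card {i // blockLabel i = 2} ≤ 4 := by
    decide
  have hU (b) : fiberSpan K blockLabel u b ≠ ⊤ := fiberSpan_ne_top (hV ▸ hlt b)
  have hT (b) : fiberSpan K blockLabel v b ≠ ⊤ := fiberSpan_ne_top (hW ▸ hlt b)
  exact blockSpan_ne_top (hU 0) (hT 0) (hU 1) (hT 2)
    (disjoint_fiberSpan_of_codisjoint (hV ▸ hsum)) (disjoint_fiberSpan_of_codisjoint (hW ▸ hsum))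

theorem not_basis_7733_general (hV : finrank K V = 4) (hW : finrank K W = 4)
    (u : Fin 7 → V) (v : Fin 7 → W) :
    ¬ LinearIndependent K (fun e : E77 => u e.1.1 ⊗ₜ[K] v e.1.2) := by
  intro hli
  have hVfin : FiniteDimensional K V := .of_finrank_pos (by omega)
  have hWfin : FiniteDimensional K W := .of_finrank_pos (by omega)
  have hspan := hli.span_eq_top_of_card_eq_finrank' (by
    rw [card_E77, finrank_tensorProduct, hV, hW])
  refine blockSpan_fiberSpan_blockLabel_ne_top hV hW u v (top_le_iff.1 (hspan ▸ ?_))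
  refine Submodule.span_le.2 (Set.range_subset_iff.2 fun e => ?_)
  obtain ⟨hlabel, -⟩ : e.1 ∈ {e | blockLabel e.1 = blockLabel e.2} \ {(2, 2)} :=
    E77_eq_diff ▸ e.2
  exact tmul_mem_blockSpan (mem_fiberSpan K blockLabel u _)
    (hlabel ▸ mem_fiberSpan K blockLabel v _)

end E77

theorem not_basis_7733 (K : Type*) [Field K] (u v : Fin 7 → Fin 4 → K) :
    ¬ LinearIndependent K
        (fun e : E77 => fun kl : Fin 4 × Fin 4 => u e.1.1 kl.1 * v e.1.2 kl.2) := by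
  rw [← linearIndependent_tmul_iff_mul]
  exact not_basis_7733_general (finrank_fin_fun K) (finrank_fin_fun K) u v
end
end

section
/- Let m, n ≥ 1 and 1 ≤ d ≤ min(m,n), and let G ⊆ [m]×[n] be a bipartite graph. If G admits a d-coloring of its edges that is d-Bernstein, then for every field F the complement ([m]×[n]) ∖ G is spanning in the tensor matroid T_{m,n}(m−d, n−d, F) (equivalently, G is independent in the dual of T_{m,n}(m−d, n−d, F)). -/
open scoped Classical

noncomputable section

/-- A `d`-coloring `χ` of the edges of `G` is `d`-Bernstein if no cycle of `G` is
monochromatic and there is a labeling `c` of the vertices by vectors in `ℝ^d` with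
coordinates summing to zero such that for every edge `(u,v)` of color `i`,
`c_i(u) + c_i(v) > c_j(u) + c_j(v)` for every other color `j`. -/
def DBernstein {m n : ℕ} (G : Set (Fin m × Fin n)) (d : ℕ)
    (χ : Fin m × Fin n → Fin d) : Prop :=
  (∀ (k : ℕ) (i : ZMod k → Fin m) (j : ZMod k → Fin n), IsCycle G k i j →
      ¬ ∃ col : Fin d, ∀ t, χ (i t, j t) = col ∧ χ (i (t + 1), j t) = col) ∧
  ∃ c : (Fin m ⊕ Fin n) → Fin d → ℝ,
    (∀ v, ∑ i, c v i = 0) ∧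
    (∀ e ∈ G, ∀ j : Fin d, j ≠ χ e →
      c (Sum.inl e.1) j + c (Sum.inr e.2) j <
        c (Sum.inl e.1) (χ e) + c (Sum.inr e.2) (χ e))

/-!
Over the Hahn series in `t`, choose matrices `U`, `V` with independent rows orthogonal to the
columns of `t ^ (-c)` on the two sides of the graph. A functional killing every `u_i ⊗ v_j` with
`(i, j) ∉ G` is a matrix `A` such that `M = Uᵀ A V` is supported on `G`, and `M` is annihilated by
`t ^ (-c)` from both sides. Let `g` be the lowest exponent occurring in the entries of `M` after
multiplying the `(i, j)` entry by `t ^ (-c_k(i) - c_k(j))`, with `k` the color of `(i, j)`. If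
instead all entries are multiplied by these powers for one fixed `k`, the inequalities on `c` leave
only the edges of color `k` at exponent `g`: a matrix with zero row and column sums supported on a
forest, hence zero, against the choice of `g`. So `M = 0` and `A = 0`. Spanning is the
non-vanishing of a minor, so it lifts from this specialization to generic vectors.
-/

open Matrix
open scoped Kronecker

section Cycle

variable {m n : ℕ} {S T : Set (Fin m × Fin n)}

lemma IsCycle.mono (hST : S ⊆ T) {k : ℕ} {i : ZMod k → Fin m} {j : ZMod k → Fin n}
    (h : IsCycle S k i j) : IsCycle T k i j :=
  let ⟨hk, hi, hj, hmem, hmem'⟩ := h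
  ⟨hk, hi, hj, fun t => hST (hmem t), fun t => hST (hmem' t)⟩

lemma isCycle_of_closed_path {k : ℕ} (hk : 2 ≤ k) {i : ℕ → Fin m} {j : ℕ → Fin n}
    (hi : Set.InjOn i (Set.Iio k)) (hj : Set.InjOn j (Set.Iio k))
    (hmem : ∀ t < k, (i t, j t) ∈ S) (hmem_succ : ∀ t, t + 1 < k → (i (t + 1), j t) ∈ S)
    (hclose : (i 0, j (k - 1)) ∈ S) :
    IsCycle S k (fun t => i t.val) (fun t => j t.val) := by
  have : NeZero k := ⟨by omega⟩
  have : Fact (1 < k) := ⟨by omega⟩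
  refine ⟨hk, fun a b h => ZMod.val_injective k (hi (ZMod.val_lt a) (ZMod.val_lt b) h),
    fun a b h => ZMod.val_injective k (hj (ZMod.val_lt a) (ZMod.val_lt b) h),
    fun t => hmem _ (ZMod.val_lt t), fun t => ?_⟩
  have ht : t.val < k := ZMod.val_lt t
  simp only [ZMod.val_add, ZMod.val_one]
  rcases Nat.lt_or_ge (t.val + 1) k with hlt | hge
  · rw [Nat.mod_eq_of_lt hlt]
    exact hmem_succ _ hlt
  · have hlast : t.val = k - 1 := by omega
    rwa [hlast, Nat.sub_add_cancel (by omega), Nat.mod_self]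

lemma injOn_comp_add_Iio {α : Type*} {f : ℕ → α} {k : ℕ}
    (hf : ∀ x y, x < y → y < x + k → f x ≠ f y) (a : ℕ) :
    Set.InjOn (fun t => f (a + t)) (Set.Iio k) := by
  intro x hx y hy hxy
  rw [Set.mem_Iio] at hx hy
  rcases lt_trichotomy x y with hlt | heq | hgt
  · exact absurd hxy (hf _ _ (by omega) (by omega))
  · exact heq
  · exact absurd hxy.symm (hf _ _ (by omega) (by omega))

/-- An infinite walk in the bipartite graph `S`, visiting `i 0, j 0, i 1, j 1, …` in this order and
never going back along the edge it has just used. -/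
structure IsZigzag (S : Set (Fin m × Fin n)) (i : ℕ → Fin m) (j : ℕ → Fin n) : Prop where
  mem (t : ℕ) : (i t, j t) ∈ S
  mem_succ (t : ℕ) : (i (t + 1), j t) ∈ S
  fst_succ_ne (t : ℕ) : i (t + 1) ≠ i t
  snd_succ_ne (t : ℕ) : j (t + 1) ≠ j t

namespace IsZigzag

variable {i : ℕ → Fin m} {j : ℕ → Fin n}

lemma exists_minimal_return (h : IsZigzag S i j) :
    ∃ k, 2 ≤ k ∧ (∃ a, i a = i (a + k) ∨ j a = j (a + k)) ∧
      ∀ a, Set.InjOn (fun t => i (a + t)) (Set.Iio k) ∧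
        Set.InjOn (fun t => j (a + t)) (Set.Iio k) := by
  have hreturn : ∃ k, 1 ≤ k ∧ ∃ a, i a = i (a + k) ∨ j a = j (a + k) := by
    obtain ⟨a, b, hab, hi⟩ := Finite.exists_ne_map_eq_of_infinite i
    wlog hlt : a < b generalizing a b
    · exact this b a hab.symm hi.symm (by omega)
    exact ⟨b - a, by omega, a, .inl (by rwa [Nat.add_sub_cancel' hlt.le])⟩
  obtain ⟨k, ⟨hk, a, ha⟩, hmin⟩ := Nat.findX hreturn
  have hne : ∀ x y, x < y → y < x + k → i x ≠ i y ∧ j x ≠ j y := by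
    intro x y hxy hlt
    have hnot := hmin (y - x) (by omega)
    push Not at hnot
    simpa only [Nat.add_sub_cancel' hxy.le] using hnot (by omega) x
  refine ⟨k, ?_, ⟨a, ha⟩, fun b =>
    ⟨injOn_comp_add_Iio (fun x y hxy hlt => (hne x y hxy hlt).1) b,
      injOn_comp_add_Iio (fun x y hxy hlt => (hne x y hxy hlt).2) b⟩⟩
  by_contra hlt
  obtain rfl : k = 1 := by omega
  exact ha.elim (h.fst_succ_ne a).symm (h.snd_succ_ne a).symm

lemma exists_isCycle (h : IsZigzag S i j) :
    ∃ (k : ℕ) (i' : ZMod k → Fin m) (j' : ZMod k → Fin n), IsCycle S k i' j' := by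
  obtain ⟨k, hk, ⟨a, hi | hj⟩, hinj⟩ := h.exists_minimal_return
  · refine ⟨k, _, _, isCycle_of_closed_path hk (hinj a).1 (hinj a).2 (fun t _ => h.mem _)
      (fun t _ => h.mem_succ _) ?_⟩
    have hlast := h.mem_succ (a + (k - 1))
    rwa [show a + (k - 1) + 1 = a + k by omega, ← hi] at hlast
  · refine ⟨k, _, _, isCycle_of_closed_path hk (hinj (a + 1)).1 (hinj (a + 1)).2
      (fun t _ => h.mem _) (fun t _ => h.mem_succ _) ?_⟩
    rw [show a + 1 + (k - 1) = a + k by omega, ← hj]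
    exact h.mem_succ a

end IsZigzag

/-- An edge of the bipartite graph `S` one of whose endpoints has degree one. -/
def IsLeafEdge (S : Set (Fin m × Fin n)) (e : Fin m × Fin n) : Prop :=
  e ∈ S ∧ ((∀ i, (i, e.2) ∈ S → i = e.1) ∨ ∀ j, (e.1, j) ∈ S → j = e.2)

lemma exists_isZigzag_of_forall_not_isLeafEdge (hS : S.Nonempty) (hleaf : ∀ e, ¬ IsLeafEdge S e) :
    ∃ i j, IsZigzag S i j := by
  have hnext : ∀ e : S, ∃ e' : S, e'.1.1 ≠ e.1.1 ∧ e'.1.2 ≠ e.1.2 ∧ (e'.1.1, e.1.2) ∈ S := by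
    rintro ⟨e, he⟩
    simp only [IsLeafEdge, not_and, not_or, not_forall] at hleaf
    obtain ⟨i, hi, hie⟩ := (hleaf e he).1
    obtain ⟨j, hj, hje⟩ := (hleaf _ hi).2
    exact ⟨⟨_, hj⟩, hie, hje, hi⟩
  choose next hfst hsnd hmem using hnext
  obtain ⟨e₀, he₀⟩ := hS
  let walk : ℕ → S := fun t => next^[t] ⟨e₀, he₀⟩
  have hwalk (t : ℕ) : walk (t + 1) = next (walk t) := Function.iterate_succ_apply' next t _
  refine ⟨fun t => (walk t).1.1, fun t => (walk t).1.2, fun t => (walk t).2, fun t => ?_,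
    fun t => ?_, fun t => ?_⟩ <;> simp only [hwalk]
  exacts [hmem _, hfst _, hsnd _]

theorem exists_isLeafEdge_of_forall_not_isCycle (hS : S.Nonempty)
    (hS' : ∀ k (i : ZMod k → Fin m) (j : ZMod k → Fin n), ¬ IsCycle S k i j) :
    ∃ e, IsLeafEdge S e := by
  by_contra! hleaf
  obtain ⟨i, j, hwalk⟩ := exists_isZigzag_of_forall_not_isLeafEdge hS hleaf
  obtain ⟨k, i', j', hcycle⟩ := hwalk.exists_isCycle
  exact hS' k i' j' hcycle

theorem eq_zero_of_sum_eq_zero_of_forall_not_isCycle {R : Type*} [AddCommMonoid R]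
    {N : Matrix (Fin m) (Fin n) R} (hcol : ∀ j, ∑ i, N i j = 0) (hrow : ∀ i, ∑ j, N i j = 0)
    (hN : ∀ k (i : ZMod k → Fin m) (j : ZMod k → Fin n),
      ¬ IsCycle {e | N e.1 e.2 ≠ 0} k i j) : N = 0 := by
  by_contra hne
  have hsupp : {e : Fin m × Fin n | N e.1 e.2 ≠ 0}.Nonempty := by
    by_contra! hempty
    exact hne (Matrix.ext fun i j => not_not.mp (Set.eq_empty_iff_forall_notMem.mp hempty (i, j)))
  obtain ⟨⟨i, j⟩, hij, honly | honly⟩ := exists_isLeafEdge_of_forall_not_isCycle hsupp hN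
  · refine hij ?_
    rw [← hcol j, Fintype.sum_eq_single i fun i' hi' => not_not.mp (mt (honly i') hi')]
  · refine hij ?_
    rw [← hrow i, Fintype.sum_eq_single j fun j' hj' => not_not.mp (mt (honly j') hj')]

end Cycle

section Coloring

variable {m n : ℕ} {κ : Type*}

/-- Every color class of the edge coloring `χ` of `G` is a forest: the first condition in the
definition of a `d`-Bernstein coloring. -/
def NoMonochromaticCycle (G : Set (Fin m × Fin n)) (χ : Fin m × Fin n → κ) : Prop :=
  ∀ (k : ℕ) (i : ZMod k → Fin m) (j : ZMod k → Fin n), IsCycle G k i j →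
    ¬ ∃ col : κ, ∀ t, χ (i t, j t) = col ∧ χ (i (t + 1), j t) = col

/-- The vertex labeling `c` selects the color of each edge of `G` as the strict maximum of the sum
of the labels of its endpoints: the inequalities in the definition of a `d`-Bernstein coloring, for
labels in an arbitrary ordered group. -/
def IsDominantLabeling {Γ : Type*} [Add Γ] [LT Γ] (G : Set (Fin m × Fin n))
    (χ : Fin m × Fin n → κ) (c : Fin m ⊕ Fin n → κ → Γ) : Prop :=
  ∀ e ∈ G, ∀ k, k ≠ χ e →
    c (Sum.inl e.1) k + c (Sum.inr e.2) k < c (Sum.inl e.1) (χ e) + c (Sum.inr e.2) (χ e)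

theorem NoMonochromaticCycle.eq_zero_of_sum_eq_zero {G : Set (Fin m × Fin n)}
    {χ : Fin m × Fin n → κ} (hχ : NoMonochromaticCycle G χ) {R : Type*} [AddCommMonoid R]
    {N : Matrix (Fin m) (Fin n) R} (hN : ∀ i j, (i, j) ∉ G → N i j = 0)
    (hcol : ∀ j k, ∑ i, (if χ (i, j) = k then N i j else 0) = 0)
    (hrow : ∀ i k, ∑ j, (if χ (i, j) = k then N i j else 0) = 0) : N = 0 := by
  have hcolor (k : κ) : (of fun i j => if χ (i, j) = k then N i j else 0) = 0 := by
    refine eq_zero_of_sum_eq_zero_of_forall_not_isCycle (fun j => hcol j k) (fun i => hrow i k) ?_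
    intro l i j hcycle
    simp only [of_apply, ne_eq, ite_eq_right_iff, Classical.not_imp] at hcycle
    have hG : IsCycle G l i j := hcycle.mono fun e he => not_not.mp (mt (hN e.1 e.2) he.2)
    obtain ⟨-, -, -, hmem, hmem'⟩ := hcycle
    exact hχ l i j hG ⟨k, fun t => ⟨(hmem t).1, (hmem' t).1⟩⟩
  ext i j
  simpa only [of_apply, if_true] using congrFun₂ (hcolor (χ (i, j))) i j

end Coloring

section HahnSeries

/-- The matrix with entries `t ^ (-c i k)` over the Hahn series in `t`. With this sign, the
coefficients of a product with it are read off at exponents shifted up by the labels. -/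
def monomialMatrix {ι κ Γ : Type*} [PartialOrder Γ] [Neg Γ] (R : Type*) [Zero R] [One R]
    (c : ι → κ → Γ) : Matrix ι κ (HahnSeries Γ R) :=
  of fun i k => HahnSeries.single (-c i k) 1

section Coeff

variable {ι κ ι' Γ R : Type*} [Fintype ι] [AddCommGroup Γ] [PartialOrder Γ]
  [IsOrderedAddMonoid Γ] [NonAssocSemiring R]

lemma coeff_mul_monomialMatrix (M : Matrix ι' ι (HahnSeries Γ R)) (c : ι → κ → Γ) (i : ι') (k : κ)
    (g : Γ) : ((M * monomialMatrix R c) i k).coeff g = ∑ j, (M i j).coeff (g + c j k) := by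
  simp only [mul_apply, monomialMatrix, of_apply, HahnSeries.coeff_sum,
    HahnSeries.coeff_mul_single, sub_neg_eq_add, mul_one]

lemma coeff_monomialMatrix_transpose_mul (M : Matrix ι ι' (HahnSeries Γ R)) (c : ι → κ → Γ)
    (k : κ) (j : ι') (g : Γ) :
    (((monomialMatrix R c)ᵀ * M) k j).coeff g = ∑ i, (M i j).coeff (g + c i k) := by
  simp only [mul_apply, transpose_apply, monomialMatrix, of_apply, HahnSeries.coeff_sum,
    HahnSeries.coeff_single_mul, sub_neg_eq_add, one_mul]

end Coeff

variable {Γ : Type*} [AddCommGroup Γ] [LinearOrder Γ] [IsOrderedAddMonoid Γ]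

lemma exists_lowest_weighted_coeff {ι R : Type*} [Finite ι] [Zero R] {x : ι → HahnSeries Γ R}
    (hx : x ≠ 0) (w : ι → Γ) :
    ∃ g, (∃ i, (x i).coeff (g + w i) ≠ 0) ∧ ∀ i, ∀ h < g + w i, (x i).coeff h = 0 := by
  obtain ⟨i, hi⟩ := Function.ne_iff.mp hx
  obtain ⟨e, he, hmin⟩ := Set.exists_min_image {i | x i ≠ 0} (fun i => (x i).order - w i)
    (Set.toFinite _) ⟨i, hi⟩
  refine ⟨(x e).order - w e, ⟨e, ?_⟩, fun i h hh => ?_⟩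
  · rw [sub_add_cancel]
    exact HahnSeries.coeff_order_eq_zero.not.mpr he
  · by_cases hxi : x i = 0
    · rw [hxi, HahnSeries.coeff_zero]
    · exact HahnSeries.coeff_eq_zero_of_lt_order
        (hh.trans_le (le_sub_iff_add_le.mp (hmin i hxi)))

theorem eq_zero_of_monomialMatrix_mul_eq_zero {m n : ℕ} {κ R : Type*} [NonAssocSemiring R]
    {G : Set (Fin m × Fin n)} {χ : Fin m × Fin n → κ} (hχ : NoMonochromaticCycle G χ)
    {c : Fin m ⊕ Fin n → κ → Γ} (hc : IsDominantLabeling G χ c)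
    {M : Matrix (Fin m) (Fin n) (HahnSeries Γ R)} (hM : ∀ i j, (i, j) ∉ G → M i j = 0)
    (hleft : (monomialMatrix R (c ∘ Sum.inl))ᵀ * M = 0)
    (hright : M * monomialMatrix R (c ∘ Sum.inr) = 0) : M = 0 := by
  by_contra hne
  let w (e : Fin m × Fin n) (k : κ) : Γ := c (Sum.inl e.1) k + c (Sum.inr e.2) k
  obtain ⟨g, ⟨e, he⟩, hlow⟩ := exists_lowest_weighted_coeff
    (x := fun e : Fin m × Fin n => M e.1 e.2)
    (fun h => hne (Matrix.ext fun i j => congrFun h (i, j))) (fun e => w e (χ e))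
  let N : Matrix (Fin m) (Fin n) R := of fun i j => (M i j).coeff (g + w (i, j) (χ (i, j)))
  have hN_color (i : Fin m) (j : Fin n) (k : κ) :
      (if χ (i, j) = k then N i j else 0) = (M i j).coeff (g + w (i, j) k) := by
    split_ifs with hk
    · rw [← hk]
      rfl
    by_cases hG : (i, j) ∈ G
    · exact (hlow (i, j) _ (add_lt_add_right (hc _ hG k (Ne.symm hk)) g)).symm
    · rw [hM i j hG, HahnSeries.coeff_zero]
  have hN : N = 0 := by
    refine hχ.eq_zero_of_sum_eq_zero (fun i j hG => ?_) (fun j k => ?_) (fun i k => ?_)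
    · simp only [N, of_apply, hM i j hG, HahnSeries.coeff_zero]
    · have hcoeff := coeff_monomialMatrix_transpose_mul M (c ∘ Sum.inl) k j (g + c (Sum.inr j) k)
      simpa only [hN_color, w, hleft, Matrix.zero_apply, HahnSeries.coeff_zero, Function.comp_apply,
        add_assoc, add_comm (c (Sum.inr j) k)] using hcoeff.symm
    · have hcoeff := coeff_mul_monomialMatrix M (c ∘ Sum.inr) i k (g + c (Sum.inl i) k)
      simpa only [hN_color, w, hright, Matrix.zero_apply, HahnSeries.coeff_zero,
        Function.comp_apply, add_assoc] using hcoeff.symm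
  exact he (congrFun₂ hN e.1 e.2)

end HahnSeries

section LinearAlgebra

variable {ι K : Type*} [Fintype ι] [Field K]

lemma exists_linearIndependent_row_mul_eq_zero {κ : Type*} [Fintype κ] {s : ℕ} (P : Matrix ι κ K)
    (hs : s + P.rank ≤ Fintype.card ι) :
    ∃ U : Matrix (Fin s) ι K, LinearIndependent K U.row ∧ U * P = 0 := by
  have hker : s ≤ Module.finrank K P.vecMulLinear.ker := by
    have hrank := P.vecMulLinear.finrank_range_add_finrank_ker
    rw [Module.finrank_fintype_fun_eq_card, range_vecMulLinear, ← rank_eq_finrank_span_row] at hrank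
    omega
  obtain ⟨u, hu⟩ := exists_linearIndependent_of_le_finrank hker
  exact ⟨of fun k => (u k : ι → K), hu.map' _ (Submodule.ker_subtype _),
    ext_row fun k => (u k).2⟩

lemma eq_zero_of_mul_eq_zero_of_linearIndependent_row {R l o : Type*} [Semiring R]
    {A : Matrix l ι R} {B : Matrix ι o R} (hB : LinearIndependent R B.row) (h : A * B = 0) :
    A = 0 :=
  ext_row fun i => vecMul_injective_iff.mpr hB <| (congrFun h i).trans (zero_vecMul B).symm

lemma span_eq_top_of_forall_dotProduct_eq_zero {s : Set (ι → K)}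
    (h : ∀ x, (∀ v ∈ s, x ⬝ᵥ v = 0) → x = 0) : Submodule.span K s = ⊤ := by
  by_contra hne
  obtain ⟨f, hf, hker⟩ := Submodule.exists_le_ker_of_lt_top _ (lt_top_iff_ne_top.mpr hne)
  obtain ⟨x, rfl⟩ := (dotProductEquiv K ι).surjective f
  refine hf ?_
  rw [h x fun v hv => hker (Submodule.subset_span hv), map_zero]

lemma span_col_image_kronecker_eq_top {ι' α β : Type*} [Fintype ι'] {U : Matrix ι α K}
    {V : Matrix ι' β K} {E : Set (α × β)}
    (h : ∀ A : Matrix ι ι' K, (∀ e ∈ E, (Uᵀ * A * V) e.1 e.2 = 0) → A = 0) :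
    Submodule.span K ((U ⊗ₖ V).col '' E) = ⊤ := by
  refine span_eq_top_of_forall_dotProduct_eq_zero fun x hx => ?_
  let A : Matrix ι ι' K := of fun k l => x (k, l)
  have hvec : vec Aᵀ ᵥ* (U ⊗ₖ V) = vec (Uᵀ * A * V)ᵀ := by
    rw [vec_vecMul_kronecker]
    simp only [transpose_mul, transpose_transpose, Matrix.mul_assoc]
  have hA : A = 0 := h A fun e he => (congrFun hvec e).symm.trans (hx _ ⟨e, he, rfl⟩)
  exact funext fun kl => congrFun₂ hA kl.1 kl.2

lemma span_col_image_eq_top_iff_exists_det_ne_zero [DecidableEq ι] {α : Type*} {B : Matrix ι α K}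
    {E : Set α} : Submodule.span K (B.col '' E) = ⊤ ↔
      ∃ e : ι → α, (∀ i, e i ∈ E) ∧ (B.submatrix id e).det ≠ 0 := by
  constructor
  · intro h
    let b := Module.Basis.ofSpan h.ge
    let b' := b.reindex (b.indexEquiv (Pi.basisFun K ι))
    have hb' (i : ι) : b' i ∈ B.col '' E :=
      Module.Basis.ofSpan_subset h.ge (by simp [b', b])
    choose e he heb using hb'
    refine ⟨e, he, ?_⟩
    have hcol : LinearIndependent K (B.submatrix id e).col := by
      rw [show (B.submatrix id e).col = b' from funext heb]
      exact b'.linearIndependent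
    rwa [linearIndependent_cols_iff_isUnit, isUnit_iff_isUnit_det, isUnit_iff_ne_zero] at hcol
  · rintro ⟨e, he, hdet⟩
    have hcol : LinearIndependent K (B.submatrix id e).col := by
      rwa [linearIndependent_cols_iff_isUnit, isUnit_iff_isUnit_det, isUnit_iff_ne_zero]
    have hspan := hcol.span_eq_top_of_card_eq_finrank' (Module.finrank_fintype_fun_eq_card K).symm
    refine top_le_iff.mp (hspan.ge.trans (Submodule.span_mono ?_))
    rintro _ ⟨i, rfl⟩
    exact ⟨e i, he i, rfl⟩

end LinearAlgebra

theorem span_col_image_map_eq_top_of_injective {ι K L R α : Type*} [Finite ι]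
    [Field K] [Field L] [CommRing R] {φ : R →+* L} {ψ : R →+* K} (hψ : Function.Injective ψ)
    {B : Matrix ι α R} {E : Set α}
    (h : Submodule.span L ((B.map φ).col '' E) = ⊤) :
    Submodule.span K ((B.map ψ).col '' E) = ⊤ := by
  have := Fintype.ofFinite ι
  obtain ⟨e, he, hdet⟩ := span_col_image_eq_top_iff_exists_det_ne_zero.mp h
  refine span_col_image_eq_top_iff_exists_det_ne_zero.mpr ⟨e, he, ?_⟩
  rw [submatrix_map, ← RingHom.mapMatrix_apply, ← RingHom.map_det] at hdet ⊢
  exact (map_ne_zero_iff ψ hψ).mpr fun h0 => hdet (by rw [h0, map_zero])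

section TensorMatroid

variable {m n s r : ℕ} {F : Type*} [Field F]

theorem tensorSpanning_of_specialization {L : Type*} [Field L] [Algebra F L]
    (U : Matrix (Fin s) (Fin m) L) (V : Matrix (Fin r) (Fin n) L) {E : Set (Fin m × Fin n)}
    (h : Submodule.span L ((U ⊗ₖ V).col '' E) = ⊤) : TensorSpanning F m n s r E := by
  let X : Matrix (Fin s) (Fin m) (MvPolynomial ((Fin m × Fin s) ⊕ (Fin n × Fin r)) F) :=
    of fun k i => MvPolynomial.X (Sum.inl (i, k))
  let Y : Matrix (Fin r) (Fin n) (MvPolynomial ((Fin m × Fin s) ⊕ (Fin n × Fin r)) F) :=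
    of fun l j => MvPolynomial.X (Sum.inr (j, l))
  let φ : MvPolynomial ((Fin m × Fin s) ⊕ (Fin n × Fin r)) F →+* L :=
    (MvPolynomial.aeval (Sum.elim (fun x => U x.2 x.1) fun y => V y.2 y.1)).toRingHom
  have hspecial : (X ⊗ₖ Y).map φ = U ⊗ₖ V := by
    ext kl e
    simp [X, Y, φ]
  have hgeneric : ((X ⊗ₖ Y).map (algebraMap _ (TField F m n s r))).col = tvec F m n s r := by
    ext e kl
    simp [X, Y, tvec]
  rw [TensorSpanning, ← hgeneric]
  exact span_col_image_map_eq_top_of_injective (IsFractionRing.injective _ _)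
    (hspecial.symm ▸ h)

theorem dBernstein_implies_spanning_general {κ Γ : Type*} [Fintype κ] [AddCommGroup Γ]
    [LinearOrder Γ] [IsOrderedAddMonoid Γ] (hs : s + Fintype.card κ ≤ m)
    (hr : r + Fintype.card κ ≤ n) {G : Set (Fin m × Fin n)} {χ : Fin m × Fin n → κ}
    (hχ : NoMonochromaticCycle G χ) {c : Fin m ⊕ Fin n → κ → Γ} (hc : IsDominantLabeling G χ c) :
    TensorSpanning F m n s r Gᶜ := by
  let P : Matrix (Fin m) κ (HahnSeries Γ F) := monomialMatrix F (c ∘ Sum.inl)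
  let Q : Matrix (Fin n) κ (HahnSeries Γ F) := monomialMatrix F (c ∘ Sum.inr)
  have hP : s + P.rank ≤ Fintype.card (Fin m) := by
    simpa using (Nat.add_le_add_left P.rank_le_card_width s).trans hs
  have hQ : r + Q.rank ≤ Fintype.card (Fin n) := by
    simpa using (Nat.add_le_add_left Q.rank_le_card_width r).trans hr
  obtain ⟨U, hU, hUP⟩ := exists_linearIndependent_row_mul_eq_zero P hP
  obtain ⟨V, hV, hVQ⟩ := exists_linearIndependent_row_mul_eq_zero Q hQ
  have hPU : Pᵀ * Uᵀ = 0 := by rw [← transpose_mul, hUP, transpose_zero]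
  refine tensorSpanning_of_specialization U V (span_col_image_kronecker_eq_top fun A hA => ?_)
  have hUAV : Uᵀ * A * V = 0 := by
    refine eq_zero_of_monomialMatrix_mul_eq_zero hχ hc (fun i j hij => hA (i, j) hij) ?_ ?_
    · rw [← Matrix.mul_assoc, ← Matrix.mul_assoc, hPU, Matrix.zero_mul, Matrix.zero_mul]
    · rw [Matrix.mul_assoc, hVQ, Matrix.mul_zero]
  have hUA : Uᵀ * A = 0 := eq_zero_of_mul_eq_zero_of_linearIndependent_row hV hUAV
  have hAU : Aᵀ * U = 0 := by
    simpa only [transpose_mul, transpose_transpose, transpose_zero]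
      using congrArg transpose hUA
  exact transpose_eq_zero.mp (eq_zero_of_mul_eq_zero_of_linearIndependent_row hU hAU)

end TensorMatroid

theorem dBernstein_implies_spanning (m n d : ℕ) (hm : 1 ≤ m) (hn : 1 ≤ n)
    (hd : 1 ≤ d) (hdm : d ≤ m) (hdn : d ≤ n) (G : Set (Fin m × Fin n))
    (h : ∃ χ : Fin m × Fin n → Fin d, DBernstein G d χ)
    (F : Type*) [Field F] :
    TensorSpanning F m n (m - d) (n - d) Gᶜ := by
  obtain ⟨χ, hχ, c, -, hc⟩ := h
  exact dBernstein_implies_spanning_general (by simp [hdm]) (by simp [hdn]) hχ hc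
end
end

section
/- Let 0 ≤ a ≤ m and 0 ≤ b ≤ n, and let G ⊆ [m]×[n] be independent in the bipartite rigidity matroid B_{m,n}(a,b) (i.e., the columns of R_{m,n}(a,b) indexed by G are linearly independent). Then for all subsets S ⊆ [m] and T ⊆ [n] with |S| ≥ a and |T| ≥ b, we have |G ∩ (S×T)| ≤ |T|·a + |S|·b − a·b; that is, G does not violate the (a,b)-Laman condition. -/
open scoped Classical

noncomputable section

/-- The rational function field `ℚ(x_{pj}, y_{qℓ})` with `(p,j) ∈ [m]×[a]`,
`(q,ℓ) ∈ [n]×[b]`. -/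
abbrev RField (m n a b : ℕ) :=
  FractionRing (MvPolynomial ((Fin m × Fin a) ⊕ (Fin n × Fin b)) ℚ)

/-- The column of the bipartite rigidity matrix `R_{m,n}(a,b)` labeled by
`e ∈ [m]×[n]`: the row labeled `(j,k) ∈ [a]×[n]` has entry `x_{e.1, j}` if `e.2 = k`
and `0` otherwise, and the row labeled `(ℓ,i) ∈ [b]×[m]` has entry `y_{e.2, ℓ}` if
`e.1 = i` and `0` otherwise. -/
noncomputable def rigCol (m n a b : ℕ) (e : Fin m × Fin n) :
    (Fin a × Fin n) ⊕ (Fin b × Fin m) → RField m n a b := fun row =>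
  match row with
  | Sum.inl (j, k) =>
      if e.2 = k then
        algebraMap (MvPolynomial ((Fin m × Fin a) ⊕ (Fin n × Fin b)) ℚ) (RField m n a b)
          (MvPolynomial.X (Sum.inl (e.1, j)))
      else 0
  | Sum.inr (l, i) =>
      if e.1 = i then
        algebraMap (MvPolynomial ((Fin m × Fin a) ⊕ (Fin n × Fin b)) ℚ) (RField m n a b)
          (MvPolynomial.X (Sum.inr (e.2, l)))
      else 0

/-- `G` is independent in the bipartite rigidity matroid `B_{m,n}(a,b)`: the columns of
`R_{m,n}(a,b)` indexed by `G` are linearly independent. -/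
def RigIndep (m n a b : ℕ) (G : Set (Fin m × Fin n)) : Prop :=
  LinearIndependent (RField m n a b) (fun e : G => rigCol m n a b e)

/-!
Put points `x p ∈ V` and `y q ∈ W` at the vertices `p ∈ ι` and `q ∈ κ`. The vector of an edge
`(p, q)` has `x p` in slot `q` and `y q` in slot `p`. Applying `u ↦ ∑ u q ⊗ y q` to the `V`-valued
slots and `w ↦ ∑ x p ⊗ w p` to the `W`-valued ones gives `x p ⊗ y q` both times, so every edge
vector lies in the kernel of the difference of these maps. When the `y q` span `W`, the difference
maps onto `V ⊗ W`, and rank-nullity leaves room for at most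
`|κ| * dim V + |ι| * dim W - dim V * dim W` independent edge vectors. For the edges inside `S × T`,
replace `V` and `W` by the spans of the points at `S` and at `T`; for generic points with enough
vertices, these are the whole spaces.
-/

open Module Submodule TensorProduct

-- Unlike `Module.finrank_finsupp`, this allows `ι` and `M` in different universes.
theorem finrank_finsupp_eq_card_mul (R M ι : Type*) [Semiring R] [StrongRankCondition R]
    [AddCommMonoid M] [Module R M] [Module.Free R M] [Fintype ι] :
    finrank R (ι →₀ M) = Fintype.card ι * finrank R M := by
  simp [finrank, rank_finsupp]

section EdgeVectors

variable {R V W ι κ : Type*} [CommRing R] [AddCommGroup V] [Module R V] [AddCommGroup W]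
  [Module R W]

/-- The column of the edge `(p, q)` in the bipartite rigidity matrix of a framework with points
`x p` and `y q` in arbitrary modules, with the rows grouped by vertex: the block of the vertex
`q` is `x p`, the block of the vertex `p` is `y q`, and all other blocks vanish. -/
def edgeVector (x : ι → V) (y : κ → W) (e : ι × κ) : (κ →₀ V) × (ι →₀ W) :=
  (Finsupp.single e.2 (x e.1), Finsupp.single e.1 (y e.2))

variable (R) in
/-- The linear map `(u, w) ↦ ∑ u q ⊗ y q - ∑ x p ⊗ w p`, each of whose coordinates is a
linear dependency between the rows of the bipartite rigidity matrix. -/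
def rowRelation (x : ι → V) (y : κ → W) : (κ →₀ V) × (ι →₀ W) →ₗ[R] V ⊗[R] W :=
  (Finsupp.lsum ℕ fun q => (TensorProduct.mk R V W).flip (y q)).coprod
    (-Finsupp.lsum ℕ fun p => TensorProduct.mk R V W (x p))

theorem rowRelation_edgeVector (x : ι → V) (y : κ → W) (e : ι × κ) :
    rowRelation R x y (edgeVector x y e) = 0 := by
  simp [rowRelation, edgeVector]

theorem rowRelation_surjective (x : ι → V) {y : κ → W} (hy : span R (Set.range y) = ⊤) :
    Function.Surjective (rowRelation R x y) := by
  have tmul_mem (v : V) (w : W) : v ⊗ₜ[R] w ∈ LinearMap.range (rowRelation R x y) := by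
    have hw : w ∈ span R (Set.range y) := hy ▸ mem_top
    induction hw using span_induction with
    | mem w hw =>
      obtain ⟨q, rfl⟩ := hw
      exact ⟨(Finsupp.single q v, 0), by simp [rowRelation]⟩
    | zero => simp
    | add w w' _ _ hw hw' => simpa only [tmul_add] using add_mem hw hw'
    | smul c w _ hw => simpa only [tmul_smul] using smul_mem _ c hw
  rw [← LinearMap.range_eq_top, eq_top_iff, ← span_tmul_eq_top, span_le]
  rintro _ ⟨v, w, rfl⟩
  exact tmul_mem v w

/-- The linear map applying `f` and `g` to the blocks at the vertices of `κ` and of `ι`, and moving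
the blocks along the vertex maps `τ : κ → κ'` and `σ : ι → ι'`. -/
def blockMap {V' W' ι' κ' : Type*} [AddCommGroup V'] [Module R V'] [AddCommGroup W'] [Module R W']
    (f : V →ₗ[R] V') (g : W →ₗ[R] W') (σ : ι → ι') (τ : κ → κ') :
    (κ →₀ V) × (ι →₀ W) →ₗ[R] (κ' →₀ V') × (ι' →₀ W') :=
  (Finsupp.lmapDomain V' R τ ∘ₗ Finsupp.mapRange.linearMap f).prodMap
    (Finsupp.lmapDomain W' R σ ∘ₗ Finsupp.mapRange.linearMap g)

theorem blockMap_edgeVector {V' W' ι' κ' : Type*} [AddCommGroup V'] [Module R V'] [AddCommGroup W']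
    [Module R W'] (f : V →ₗ[R] V') (g : W →ₗ[R] W') (σ : ι → ι') (τ : κ → κ') {x : ι → V}
    {y : κ → W} {x' : ι' → V'} {y' : κ' → W'} (hx : ∀ p, f (x p) = x' (σ p))
    (hy : ∀ q, g (y q) = y' (τ q)) (e : ι × κ) :
    blockMap f g σ τ (edgeVector x y e) = edgeVector x' y' (e.map σ τ) := by
  simp [blockMap, edgeVector, hx, hy, Finsupp.mapDomain_single]

variable {K : Type*} [Field K] [Module K V] [Module K W]

theorem card_add_finrank_mul_finrank_le [FiniteDimensional K V] [Fintype ι]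
    [Fintype κ] {η : Type*} [Fintype η] {x : ι → V} {y : κ → W} {e : η → ι × κ}
    (hy : span K (Set.range y) = ⊤) (he : LinearIndependent K fun i => edgeVector x y (e i)) :
    Fintype.card η + finrank K V * finrank K W ≤
      Fintype.card κ * finrank K V + Fintype.card ι * finrank K W := by
  have : FiniteDimensional K W := ⟨hy ▸ fg_span (Set.finite_range y)⟩
  let Φ := rowRelation K x y
  have he_ker : LinearIndependent K fun i =>
      (⟨edgeVector x y (e i), rowRelation_edgeVector x y (e i)⟩ : LinearMap.ker Φ) :=
    .of_comp (LinearMap.ker Φ).subtype he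
  calc Fintype.card η + finrank K V * finrank K W
      ≤ finrank K (LinearMap.ker Φ) + finrank K (V ⊗[K] W) :=
        add_le_add he_ker.fintype_card_le_finrank finrank_tensorProduct.ge
    _ = finrank K (LinearMap.range Φ) + finrank K (LinearMap.ker Φ) := by
        rw [LinearMap.range_eq_top.mpr (rowRelation_surjective x hy), finrank_top, add_comm]
    _ = finrank K ((κ →₀ V) × (ι →₀ W)) := Φ.finrank_range_add_finrank_ker
    _ = Fintype.card κ * finrank K V + Fintype.card ι * finrank K W := by
        simp only [finrank_prod, finrank_finsupp_eq_card_mul]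

theorem indep_satisfies_laman_general [DecidableEq ι] [DecidableEq κ] {x : ι → V} {y : κ → W}
    {G : Finset (ι × κ)} (hG : LinearIndepOn K (edgeVector x y) (G : Set (ι × κ)))
    (S : Finset ι) (T : Finset κ) :
    (G ∩ S ×ˢ T).card + finrank K (span K (x '' S)) * finrank K (span K (y '' T)) ≤
      T.card * finrank K (span K (x '' S)) + S.card * finrank K (span K (y '' T)) := by
  have : FiniteDimensional K (span K (x '' S)) := .span_of_finite K (S.finite_toSet.image x)
  let xS (p : S) : span K (x '' S) := ⟨x p, subset_span ⟨p, p.2, rfl⟩⟩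
  let yT (q : T) : span K (y '' T) := ⟨y q, subset_span ⟨q, q.2, rfl⟩⟩
  have span_yT : span K (Set.range yT) = ⊤ := by
    have range_yT : Set.range yT = (↑) ⁻¹' (y '' T) := by
      ext ⟨w, hw⟩
      simp [yT]
    rw [range_yT, span_span_coe_preimage]
  have mem_ST (e : ↥(G ∩ S ×ˢ T)) : e.1.1 ∈ S ∧ e.1.2 ∈ T :=
    Finset.mem_product.mp (Finset.mem_inter.mp e.2).2
  let toST (e : ↥(G ∩ S ×ˢ T)) : S × T := (⟨e.1.1, (mem_ST e).1⟩, ⟨e.1.2, (mem_ST e).2⟩)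
  have indep_ST : LinearIndependent K fun e => edgeVector xS yT (toST e) := by
    let J := blockMap (span K (x '' S)).subtype (span K (y '' T)).subtype
      (Subtype.val : S → ι) (Subtype.val : T → κ)
    have map_J (e : ↥(G ∩ S ×ˢ T)) : J (edgeVector xS yT (toST e)) = edgeVector x y e.1 :=
      blockMap_edgeVector (x' := x) (y' := y) _ _ _ _ (fun _ => rfl) (fun _ => rfl) (toST e)
    refine .of_comp J ?_
    simp only [Function.comp_def, map_J]
    exact hG.mono (Finset.coe_subset.mpr Finset.inter_subset_left)
  simpa only [Fintype.card_coe] using card_add_finrank_mul_finrank_le span_yT indep_ST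

end EdgeVectors

section Generic

variable {R K ι α : Type*} [CommRing R] [Field K] [Algebra R K] [Fintype α]

theorem det_ne_zero_of_algebraicIndependent [DecidableEq α] {M : Matrix α α K}
    (hM : AlgebraicIndependent R fun p : α × α => M p.1 p.2) : M.det ≠ 0 := by
  have := (algebraMap R K).domain_nontrivial
  rw [← Matrix.mvPolynomialX_mapMatrix_aeval R M, ← AlgHom.map_det]
  exact (map_ne_zero_iff _ hM).mpr (Matrix.det_mvPolynomialX_ne_zero α R)

theorem finrank_span_image_of_algebraicIndependent {x : ι → α → K}
    (hx : AlgebraicIndependent R fun p : ι × α => x p.1 p.2) {S : Finset ι}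
    (hS : Fintype.card α ≤ S.card) : finrank K (span K (x '' S)) = Fintype.card α := by
  obtain ⟨f⟩ : Nonempty (α ↪ S) :=
    Function.Embedding.nonempty_of_card_le (by rwa [Fintype.card_coe])
  let M : Matrix α α K := .of fun i => x (f i)
  have rows_indep : LinearIndependent K M.row :=
    Matrix.linearIndependent_rows_of_det_ne_zero <| det_ne_zero_of_algebraicIndependent <|
      hx.comp (Prod.map (fun i => (f i : ι)) id)
        ((Subtype.val_injective.comp f.injective).prodMap Function.injective_id)
  have rows_span : span K (Set.range M.row) = ⊤ :=
    rows_indep.span_eq_top_of_card_eq_finrank' (finrank_fintype_fun_eq_card K).symm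
  have span_eq_top : span K (x '' S) = ⊤ :=
    top_le_iff.mp <| rows_span.ge.trans <| span_mono <|
      Set.range_subset_iff.mpr fun i => ⟨f i, (f i).2, rfl⟩
  rw [span_eq_top, finrank_top, finrank_fintype_fun_eq_card]

end Generic

section RigidityMatrix

variable (m n a b : ℕ)

/-- The generic point `(x_{p1}, …, x_{pa})` at the vertex `p ∈ [m]`. -/
def leftPoint (p : Fin m) (j : Fin a) : RField m n a b :=
  algebraMap (MvPolynomial ((Fin m × Fin a) ⊕ (Fin n × Fin b)) ℚ) _ (.X (Sum.inl (p, j)))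

/-- The generic point `(y_{q1}, …, y_{qb})` at the vertex `q ∈ [n]`. -/
def rightPoint (q : Fin n) (l : Fin b) : RField m n a b :=
  algebraMap (MvPolynomial ((Fin m × Fin a) ⊕ (Fin n × Fin b)) ℚ) _ (.X (Sum.inr (q, l)))

theorem algebraicIndependent_variables :
    AlgebraicIndependent ℚ fun v => algebraMap
      (MvPolynomial ((Fin m × Fin a) ⊕ (Fin n × Fin b)) ℚ) (RField m n a b) (.X v) :=
  (MvPolynomial.algebraicIndependent_X _ ℚ).map' (f := IsScalarTower.toAlgHom ℚ _ _)
    (IsFractionRing.injective _ (RField m n a b))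

variable {m n a b}

theorem finrank_span_leftPoint {S : Finset (Fin m)} (hS : a ≤ S.card) :
    finrank (RField m n a b) (span (RField m n a b) (leftPoint m n a b '' (S : Set (Fin m)))) =
      a := by
  simpa only [Fintype.card_fin] using finrank_span_image_of_algebraicIndependent
    (x := leftPoint m n a b) ((algebraicIndependent_variables m n a b).comp _ Sum.inl_injective)
    (by rwa [Fintype.card_fin])

theorem finrank_span_rightPoint {T : Finset (Fin n)} (hT : b ≤ T.card) :
    finrank (RField m n a b) (span (RField m n a b) (rightPoint m n a b '' (T : Set (Fin n)))) =
      b := by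
  simpa only [Fintype.card_fin] using finrank_span_image_of_algebraicIndependent
    (x := rightPoint m n a b) ((algebraicIndependent_variables m n a b).comp _ Sum.inr_injective)
    (by rwa [Fintype.card_fin])

/-- The linear map listing the coordinates of all blocks in the row order of `rigCol`. -/
def rowCoordinates {K ι κ α β : Type*} [Semiring K] :
    (κ →₀ α → K) × (ι →₀ β → K) →ₗ[K] (α × κ) ⊕ (β × ι) → K where
  toFun u := Sum.elim (fun r => u.1 r.2 r.1) (fun r => u.2 r.2 r.1)
  map_add' _ _ := by ext (_ | _) <;> rfl
  map_smul' _ _ := by ext (_ | _) <;> rfl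

theorem rowCoordinates_edgeVector (e : Fin m × Fin n) :
    rowCoordinates (edgeVector (leftPoint m n a b) (rightPoint m n a b) e) = rigCol m n a b e := by
  ext (⟨j, k⟩ | ⟨l, i⟩) <;>
    simp only [rowCoordinates, edgeVector, rigCol, leftPoint, rightPoint, LinearMap.coe_mk,
      AddHom.coe_mk, Sum.elim_inl, Sum.elim_inr, Finsupp.single_apply, ite_apply, Pi.zero_apply]

theorem RigIndep.linearIndepOn_edgeVector {G : Set (Fin m × Fin n)} (hG : RigIndep m n a b G) :
    LinearIndepOn (RField m n a b) (edgeVector (leftPoint m n a b) (rightPoint m n a b)) G := by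
  refine LinearIndependent.of_comp rowCoordinates ?_
  simpa only [Function.comp_def, rowCoordinates_edgeVector, RigIndep] using hG

end RigidityMatrix

theorem indep_satisfies_laman (m n a b : ℕ) (ha : a ≤ m) (hb : b ≤ n)
    (G : Finset (Fin m × Fin n)) (h : RigIndep m n a b (↑G : Set (Fin m × Fin n))) :
    ∀ (S : Finset (Fin m)) (T : Finset (Fin n)), a ≤ S.card → b ≤ T.card →
      (G ∩ S ×ˢ T).card + a * b ≤ T.card * a + S.card * b := by
  intro S T hS hT
  simpa only [finrank_span_leftPoint hS, finrank_span_rightPoint hT]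
    using indep_satisfies_laman_general h.linearIndepOn_edgeVector S T
end
end
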